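/- arXiv:1504.02583 — 5 statements merged into one kernel-verified Lean document; each statement's English description precedes it below -/
import Mathlib

section
/- Let (Ω_i, Σ_i, P_i), i = 1,…,n, be probability spaces and let (Ω, Σ, P) be their product space. Let Ω* ⊆ Ω be a (measurable) set of exceptional events, let X : Ω → ℝ be a random variable, and let t ≥ 0. If X has upward (s,c)-certificates with respect to Ω*, then P[|X − med(X)| ≥ t] ≤ 4·e^{−t²/(4c²s)} + 4·P[Ω*]. -/
open MeasureTheory

/-- `X` has upward `(s,c)`-certificates with respect to the exceptional set `Ωstar`:
for every `t > 0` and every `ω ∉ Ωstar` there is an index set `I` of size at most `s`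
such that `X ω' > X ω − t` for every `ω' ∉ Ωstar` whose restriction to `I` differs from
that of `ω` in fewer than `t/c` coordinates. -/
def HasUpwardCertificates {n : ℕ} {Ω : Fin n → Type*}
    (Ωstar : Set (∀ i, Ω i)) (X : (∀ i, Ω i) → ℝ) (s c : ℝ) : Prop :=
  ∀ t : ℝ, 0 < t → ∀ ω ∉ Ωstar, ∃ I : Finset (Fin n), (I.card : ℝ) ≤ s ∧
    ∀ ω' ∉ Ωstar,
      (({i : Fin n | i ∈ I ∧ ω i ≠ ω' i}.ncard : ℝ) < t / c → X ω - t < X ω')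

/-- The median of a random variable `X` with respect to a measure `μ`:
`med(X) = sup {t | μ{X ≤ t} ≤ 1/2}`. -/
noncomputable def medianOf {α : Type*} [MeasurableSpace α] (μ : Measure α) (X : α → ℝ) : ℝ :=
  sSup {t : ℝ | μ {ω | X ω ≤ t} ≤ 1 / 2}

lemma tal_num (x : ℝ) (h0 : 0 ≤ x) (h1 : x ≤ 1 / 2) :
    Real.exp (x - x ^ 2) ≤ 2 - Real.exp (-x) := by
  have hy0 : 0 ≤ x - x ^ 2 := by nlinarith
  have hy1 : x - x ^ 2 ≤ 1 := by nlinarith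
  have a1 := Real.exp_bound' hy0 hy1 (n := 3) (by norm_num)
  have a2 := Real.exp_bound (x := -x) (by rw [abs_neg, abs_of_nonneg h0]; linarith) (n := 4)
    (by norm_num)
  rw [abs_neg, abs_of_nonneg h0] at a2
  have a3 := (abs_le.1 a2).2
  simp only [Finset.sum_range_succ, Finset.sum_range_zero, Nat.factorial] at a1 a3
  norm_num at a1 a3
  have key : 0 ≤ x ^ 3 * (1 - x / 2 - 2 / 9 * (1 - x) ^ 3 + 1 / 6 - 5 / 96 * x) := by
    apply mul_nonneg (by positivity)
    have : (1 - x) ^ 3 ≤ 1 := pow_le_one₀ (by linarith) (by linarith)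
    linarith
  nlinarith [key]

lemma tal_num0 (r : ℝ) (h : r ≤ Real.exp (-(1 / 2))) : Real.exp (1 / 4) ≤ 2 - r := by
  have := tal_num (1 / 2) (by norm_num) (by norm_num)
  norm_num at this h ⊢
  linarith

/-- 0/1 vector of a boolean vector -/
def bvec {n : ℕ} (u : Fin n → Bool) : Fin n → ℝ := fun i => if u i then 1 else 0

noncomputable def talG {n : ℕ} (W : Set (Fin n → Bool)) : ENNReal :=
  ⨅ v ∈ convexHull ℝ (bvec '' W), ENNReal.ofReal (Real.exp ((∑ i, v i ^ 2) / 4))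

lemma talG_le {n : ℕ} (W : Set (Fin n → Bool)) (v : Fin n → ℝ)
    (hv : v ∈ convexHull ℝ (bvec '' W)) :
    talG W ≤ ENNReal.ofReal (Real.exp ((∑ i, v i ^ 2) / 4)) := iInf₂_le v hv

lemma talG_exists {n : ℕ} (W : Set (Fin n → Bool)) (hW : W.Nonempty) :
    ∃ v ∈ convexHull ℝ (bvec '' W),
      talG W = ENNReal.ofReal (Real.exp ((∑ i, v i ^ 2) / 4)) := by
  have hc : IsCompact (convexHull ℝ (bvec '' W)) :=
    ((Set.toFinite W).image _).isCompact_convexHull (𝕜 := ℝ)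
  have hne : (convexHull ℝ (bvec '' W)).Nonempty := (hW.image _).convexHull
  obtain ⟨v, hv, hmin⟩ := hc.exists_isMinOn hne
    (f := fun v : Fin n → ℝ => Real.exp ((∑ i, v i ^ 2) / 4)) (by fun_prop)
  refine ⟨v, hv, le_antisymm (talG_le W v hv) ?_⟩
  refine le_iInf₂ fun w hw => ENNReal.ofReal_le_ofReal (hmin hw)

lemma bvec_insert {n : ℕ} (b : Bool) (u : Fin n → Bool) :
    bvec ((0 : Fin (n + 1)).insertNth (α := fun _ => Bool) b u) =
      (0 : Fin (n + 1)).insertNth (α := fun _ => ℝ) (if b then 1 else 0) (bvec u) := by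
  funext i
  refine Fin.cases ?_ (fun j => ?_) i <;> simp [bvec]

lemma ins_convex {n : ℕ} (W : Set (Fin n → Bool)) (W' : Set (Fin (n + 1) → Bool)) (b : Bool)
    (h : ∀ u ∈ W, (0 : Fin (n + 1)).insertNth (α := fun _ => Bool) b u ∈ W') (v : Fin n → ℝ)
    (hv : v ∈ convexHull ℝ (bvec '' W)) :
    (0 : Fin (n + 1)).insertNth (α := fun _ => ℝ) (if b then 1 else 0) v ∈
      convexHull ℝ (bvec '' W') := by
  have hconv : Convex ℝ {v : Fin n → ℝ |
      (0 : Fin (n + 1)).insertNth (α := fun _ => ℝ) (if b then 1 else 0) v ∈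
      convexHull ℝ (bvec '' W')} := by
    intro x hx y hy p q hp hq hpq
    have := convex_convexHull ℝ (bvec '' W') hx hy hp hq hpq
    simp only [Set.mem_ofPred_eq]
    convert this using 1
    funext i
    refine Fin.cases ?_ (fun j => ?_) i
    · simp
      cases b <;> simp [hpq]
    · simp
  refine convexHull_min ?_ hconv hv
  rintro _ ⟨u, hu, rfl⟩
  simp only [Set.mem_ofPred_eq]
  rw [← bvec_insert]
  exact subset_convexHull ℝ _ ⟨_, h u hu, rfl⟩

lemma talG_step0 {n : ℕ} (W2 : Set (Fin n → Bool)) (W : Set (Fin (n + 1) → Bool))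
    (hW2 : W2.Nonempty)
    (h2 : ∀ u ∈ W2, (0 : Fin (n + 1)).insertNth (α := fun _ => Bool) true u ∈ W) :
    talG W ≤ ENNReal.ofReal (Real.exp (1 / 4)) * talG W2 := by
  obtain ⟨v, hv, e⟩ := talG_exists W2 hW2
  refine (talG_le W _ (ins_convex W2 W true h2 v hv)).trans ?_
  rw [e, ← ENNReal.ofReal_mul (Real.exp_pos _).le, ← Real.exp_add]
  apply ENNReal.ofReal_le_ofReal
  apply le_of_eq
  congr 1
  rw [Fin.sum_univ_succ]
  simp
  ring

lemma talG_step {n : ℕ} (W1 W2 : Set (Fin n → Bool)) (W : Set (Fin (n + 1) → Bool))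
    (hW1 : W1.Nonempty) (hW2 : W2.Nonempty)
    (h1 : ∀ u ∈ W1, (0 : Fin (n + 1)).insertNth (α := fun _ => Bool) false u ∈ W)
    (h2 : ∀ u ∈ W2, (0 : Fin (n + 1)).insertNth (α := fun _ => Bool) true u ∈ W)
    (θ : ℝ) (h0 : 0 ≤ θ) (hθ : θ ≤ 1) :
    talG W ≤ ENNReal.ofReal (Real.exp ((1 - θ) ^ 2 / 4)) *
      (talG W1 ^ θ * talG W2 ^ (1 - θ)) := by
  obtain ⟨v, hv, e⟩ := talG_exists W1 hW1
  obtain ⟨w, hw, e'⟩ := talG_exists W2 hW2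
  refine (talG_le W _ (convex_convexHull ℝ _ (ins_convex W1 W false h1 v hv)
    (ins_convex W2 W true h2 w hw) h0 (sub_nonneg.2 hθ) (by ring))).trans ?_
  rw [e, e', ENNReal.ofReal_rpow_of_pos (Real.exp_pos _),
    ENNReal.ofReal_rpow_of_pos (Real.exp_pos _), ← Real.exp_mul, ← Real.exp_mul,
    ← ENNReal.ofReal_mul (Real.exp_pos _).le, ← ENNReal.ofReal_mul (Real.exp_pos _).le,
    ← Real.exp_add, ← Real.exp_add]
  apply ENNReal.ofReal_le_ofReal
  apply Real.exp_le_exp.2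
  rw [Fin.sum_univ_succ]
  simp
  have : ∑ i, (θ * v i + (1 - θ) * w i) ^ 2 ≤
      θ * ∑ i, v i ^ 2 + (1 - θ) * ∑ i, w i ^ 2 := by
    rw [Finset.mul_sum, Finset.mul_sum, ← Finset.sum_add_distrib]
    refine Finset.sum_le_sum fun i _ => ?_
    nlinarith [mul_nonneg (mul_nonneg h0 (sub_nonneg.2 hθ)) (sq_nonneg (v i - w i))]
  linarith

lemma talG_lower {n : ℕ} (W : Set (Fin n → Bool)) (I : Finset (Fin n)) (s τ : ℝ)
    (hs : 0 < s) (hτ : 0 ≤ τ) (hI : (I.card : ℝ) ≤ s)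
    (h : ∀ u ∈ W, τ ≤ ∑ i ∈ I, bvec u i) :
    ENNReal.ofReal (Real.exp (τ ^ 2 / (4 * s))) ≤ talG W := by
  refine le_iInf₂ fun v hv => ENNReal.ofReal_le_ofReal (Real.exp_le_exp.2 ?_)
  have hconv : Convex ℝ {v : Fin n → ℝ | τ ≤ ∑ i ∈ I, v i} := by
    apply convex_halfSpace_ge
    constructor
    · intro x y; simp [Finset.sum_add_distrib]
    · intro c x; simp [Finset.mul_sum]
  have hv' : τ ≤ ∑ i ∈ I, v i := by
    refine convexHull_min ?_ hconv hv
    rintro _ ⟨u, hu, rfl⟩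
    exact h u hu
  have h1 := sq_sum_le_card_mul_sum_sq (s := I) (f := v)
  have h2 : ∑ i ∈ I, v i ^ 2 ≤ ∑ i, v i ^ 2 :=
    Finset.sum_le_sum_of_subset_of_nonneg (Finset.subset_univ I) (fun i _ _ => sq_nonneg _)
  have h3 : τ ^ 2 ≤ (∑ i ∈ I, v i) ^ 2 := pow_le_pow_left₀ hτ hv' 2
  have h4 : 0 ≤ ∑ i, v i ^ 2 := Finset.sum_nonneg fun i _ => sq_nonneg _
  have h5 : τ ^ 2 ≤ s * ∑ i, v i ^ 2 := by
    refine h3.trans (h1.trans ?_)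
    refine mul_le_mul hI h2 (Finset.sum_nonneg fun i _ => sq_nonneg _) hs.le
  rw [div_le_div_iff₀ (by positivity) (by norm_num)]
  nlinarith

lemma tal_combine (a b : ℝ) (ha : 0 ≤ a) (hab : a ≤ b) (hb : 0 < b) (J I1 I2 : ENNReal)
    (h1 : 0 < a → I1 ≤ ENNReal.ofReal (1 / a)) (h2 : I2 ≤ ENNReal.ofReal (1 / b))
    (hJ0 : J ≤ ENNReal.ofReal (Real.exp (1 / 4)) * I2)
    (hJ : 0 < a → ∀ θ : ℝ, 0 ≤ θ → θ ≤ 1 →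
      J ≤ ENNReal.ofReal (Real.exp ((1 - θ) ^ 2 / 4)) * (I1 ^ θ * I2 ^ (1 - θ))) :
    J ≤ ENNReal.ofReal (1 / b * (2 - a / b)) := by
  by_cases hr : a / b ≤ Real.exp (-(1 / 2))
  · refine hJ0.trans ?_
    rw [mul_comm, ENNReal.ofReal_mul (by positivity)]
    exact mul_le_mul' h2 (ENNReal.ofReal_le_ofReal (tal_num0 _ hr))
  · push Not at hr
    have hr0 : 0 < a / b := (Real.exp_pos _).trans hr
    have ha' : 0 < a := by
      rcases ha.eq_or_lt with h | h
      · rw [← h] at hr0; simp at hr0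
      · exact h
    have hr1 : a / b ≤ 1 := (div_le_one hb).2 hab
    set x : ℝ := - Real.log (a / b) with hx
    have hx0 : 0 ≤ x := by
      have := Real.log_nonpos hr0.le hr1
      linarith
    have hx1 : x ≤ 1 / 2 := by
      have := (Real.lt_log_iff_exp_lt hr0).2 hr
      linarith
    have hrx : a / b = Real.exp (-x) := by rw [hx, neg_neg, Real.exp_log hr0]
    have hb1 : 1 / b = Real.exp (-Real.log b) := by rw [Real.exp_neg, Real.exp_log hb]; simp
    have hla : Real.log a = Real.log b - x := by
      rw [hx, Real.log_div ha'.ne' hb.ne']; ring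
    have ha1 : 1 / a = Real.exp (x - Real.log b) := by
      rw [show x - Real.log b = - Real.log a by rw [hla]; ring, Real.exp_neg, Real.exp_log ha']
      simp
    refine (hJ ha' (1 - 2 * x) (by linarith) (by linarith)).trans ?_
    calc _ ≤ ENNReal.ofReal (Real.exp ((1 - (1 - 2 * x)) ^ 2 / 4)) *
          (ENNReal.ofReal (1 / a) ^ (1 - 2 * x) *
            ENNReal.ofReal (1 / b) ^ (1 - (1 - 2 * x))) := by
          gcongr
          · linarith
          · exact h1 ha'
          · linarith
      _ ≤ _ := by
          rw [ha1, hb1, hrx, ENNReal.ofReal_rpow_of_pos (Real.exp_pos _),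
            ENNReal.ofReal_rpow_of_pos (Real.exp_pos _), ← Real.exp_mul, ← Real.exp_mul,
            ← ENNReal.ofReal_mul (Real.exp_pos _).le, ← ENNReal.ofReal_mul (Real.exp_pos _).le,
            ← Real.exp_add, ← Real.exp_add]
          apply ENNReal.ofReal_le_ofReal
          have := tal_num x hx0 hx1
          calc _ = Real.exp (-Real.log b) * Real.exp (x - x ^ 2) := by
                rw [← Real.exp_add]; congr 1; ring
            _ ≤ _ := by gcongr

/-- coordinates of `y` where `u` is true, else of `x` -/
def talMerge {n : ℕ} {Ω : Fin n → Type*} (u : Fin n → Bool) (x y : ∀ i, Ω i) : ∀ i, Ω i :=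
  fun i => if u i then y i else x i

def talW {n : ℕ} {Ω : Fin n → Type*} [∀ i, MeasurableSpace (Ω i)] (P : ∀ i, Measure (Ω i))
    (A : Set (∀ i, Ω i)) (x : ∀ i, Ω i) : Set (Fin n → Bool) :=
  {u | Measure.pi P {y | talMerge u x y ∈ A} ≠ 0}

lemma measurable_talMerge {n : ℕ} {Ω : Fin n → Type*} [∀ i, MeasurableSpace (Ω i)]
    (u : Fin n → Bool) :
    Measurable fun p : (∀ i, Ω i) × (∀ i, Ω i) => talMerge u p.1 p.2 := by
  refine measurable_pi_iff.2 fun i => ?_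
  unfold talMerge
  by_cases h : u i <;> simp only [h] <;> simp <;> fun_prop

lemma measurable_talW {n : ℕ} {Ω : Fin n → Type*} [∀ i, MeasurableSpace (Ω i)]
    (P : ∀ i, Measure (Ω i)) [∀ i, IsProbabilityMeasure (P i)]
    (A : Set (∀ i, Ω i)) (hA : MeasurableSet A) : Measurable (talW P A) := by
  refine measurable_set_iff.2 fun u => ?_
  have := measurable_measure_prodMk_left (ν := Measure.pi P) ((measurable_talMerge u) hA)
  have h2 := (this (measurableSet_singleton 0)).compl
  exact h2.mem

lemma measurable_talGW {n : ℕ} {Ω : Fin n → Type*} [∀ i, MeasurableSpace (Ω i)]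
    (P : ∀ i, Measure (Ω i)) [∀ i, IsProbabilityMeasure (P i)]
    (A : Set (∀ i, Ω i)) (hA : MeasurableSet A) : Measurable fun x => talG (talW P A x) :=
  (measurable_of_countable (talG (n := n))).comp (measurable_talW P A hA)

lemma talW_nonempty {n : ℕ} {Ω : Fin n → Type*} [∀ i, MeasurableSpace (Ω i)]
    (P : ∀ i, Measure (Ω i)) (A : Set (∀ i, Ω i)) (hA : Measure.pi P A ≠ 0) (x : ∀ i, Ω i) :
    (talW P A x).Nonempty :=
  ⟨fun _ => true, hA⟩

lemma talW_sound {n : ℕ} {Ω : Fin n → Type*} [∀ i, MeasurableSpace (Ω i)]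
    (P : ∀ i, Measure (Ω i)) (A : Set (∀ i, Ω i)) (x : ∀ i, Ω i) (u : Fin n → Bool)
    (hu : u ∈ talW P A x) : ∃ y ∈ A, ∀ i, x i ≠ y i → u i = true := by
  obtain ⟨y, hy⟩ := nonempty_of_measure_ne_zero hu
  refine ⟨_, hy, fun i hi => ?_⟩
  by_contra h
  exact hi (by simp [talMerge, h])

/-- glue first coordinate -/
def glue {n : ℕ} {Ω : Fin (n + 1) → Type*} (w : Ω 0) (x : ∀ j, Ω ((0 : Fin (n + 1)).succAbove j)) :
    ∀ i, Ω i := (0 : Fin (n + 1)).insertNth w x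

lemma talMerge_glue {n : ℕ} {Ω : Fin (n + 1) → Type*} (b : Bool) (u : Fin n → Bool) (w w' : Ω 0)
    (x y : ∀ j, Ω ((0 : Fin (n + 1)).succAbove j)) :
    talMerge ((0 : Fin (n + 1)).insertNth (α := fun _ => Bool) b u) (glue w x) (glue w' y) =
      glue (if b then w' else w) (talMerge u x y) := by
  funext i
  refine Fin.succAboveCases (0 : Fin (n + 1)) ?_ (fun j => ?_) i
  · simp only [talMerge, glue, Fin.insertNth_apply_same]
  · simp only [talMerge, glue, Fin.insertNth_apply_succAbove]

section
variable {n : ℕ} {Ω : Fin (n + 1) → Type*} [∀ i, MeasurableSpace (Ω i)]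
    (P : ∀ i, Measure (Ω i)) [∀ i, IsProbabilityMeasure (P i)]

lemma glue_mp : MeasurePreserving
    (fun p : Ω 0 × (∀ j, Ω ((0 : Fin (n + 1)).succAbove j)) => glue p.1 p.2)
    ((P 0).prod (Measure.pi fun j => P ((0 : Fin (n + 1)).succAbove j))) (Measure.pi P) :=
  (measurePreserving_piFinSuccAbove P 0).symm

lemma pi_glue (A : Set (∀ i, Ω i)) (hA : MeasurableSet A) :
    Measure.pi P A = ∫⁻ w, (Measure.pi fun j => P ((0 : Fin (n + 1)).succAbove j))
      {x | glue w x ∈ A} ∂(P 0) := by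
  rw [← (glue_mp P).measure_preimage hA.nullMeasurableSet,
    Measure.prod_apply ((glue_mp P).measurable hA)]
  rfl

lemma pi_glue_symm (A : Set (∀ i, Ω i)) (hA : MeasurableSet A) :
    Measure.pi P A = ∫⁻ x, (P 0) {w | glue w x ∈ A}
      ∂(Measure.pi fun j => P ((0 : Fin (n + 1)).succAbove j)) := by
  rw [← (glue_mp P).measure_preimage hA.nullMeasurableSet,
    Measure.prod_apply_symm ((glue_mp P).measurable hA)]
  rfl

lemma meas_glue_left (w : Ω 0) : Measurable (fun x => glue (Ω := Ω) w x) :=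
  (MeasurableEquiv.piFinSuccAbove Ω 0).symm.measurable.comp measurable_prodMk_left
end

theorem tal_main {n : ℕ} {Ω : Fin n → Type*} [∀ i, MeasurableSpace (Ω i)]
    (P : ∀ i, Measure (Ω i)) [∀ i, IsProbabilityMeasure (P i)]
    (A : Set (∀ i, Ω i)) (hA : MeasurableSet A) :
    (∫⁻ x, talG (talW P A x) ∂(Measure.pi P)) * Measure.pi P A ≤ 1 := by
  induction n with
  | zero =>
    by_cases h0 : Measure.pi P A = 0
    · simp [h0]
    have h1 : ∀ x, talG (talW P A x) ≤ 1 := by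
      intro x
      obtain ⟨v, _, e⟩ := talG_exists _ (talW_nonempty P A h0 x)
      rw [e]; simp
    calc _ ≤ (∫⁻ x, 1 ∂(Measure.pi P)) * 1 := mul_le_mul' (lintegral_mono h1) prob_le_one
      _ = 1 := by simp
  | succ n ih =>
    by_cases hm0 : Measure.pi P A = 0
    · simp [hm0]
    let P' : ∀ j, Measure (Ω ((0 : Fin (n + 1)).succAbove j)) :=
      fun j => P ((0 : Fin (n + 1)).succAbove j)
    have : ∀ j, IsProbabilityMeasure (P' j) := fun j => by
      change IsProbabilityMeasure (P _); infer_instance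
    let S : Ω 0 → Set (∀ j, Ω ((0 : Fin (n + 1)).succAbove j)) := fun w => {x | glue w x ∈ A}
    let B : Set (∀ j, Ω ((0 : Fin (n + 1)).succAbove j)) := {x | (P 0) {w | glue w x ∈ A} ≠ 0}
    have hgA := (glue_mp P).measurable hA
    have hS : ∀ w, MeasurableSet (S w) := fun w => meas_glue_left w hA
    have hBm : Measurable fun x => (P 0) {w | glue w x ∈ A} :=
      measurable_measure_prodMk_right (μ := P 0) hgA
    have hB : MeasurableSet B := (hBm (measurableSet_singleton 0)).compl
    have hSm : Measurable fun w => (Measure.pi P') (S w) :=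
      measurable_measure_prodMk_left (ν := Measure.pi P') hgA
    have hmA : Measure.pi P A = ∫⁻ w, (Measure.pi P') (S w) ∂(P 0) := pi_glue P A hA
    -- a.e. section is essentially inside B
    have hSB : ∀ᵐ w ∂(P 0), (Measure.pi P') (S w) ≤ (Measure.pi P') B := by
      have hC : MeasurableSet {p : Ω 0 × (∀ j, Ω ((0 : Fin (n + 1)).succAbove j)) |
          glue p.1 p.2 ∈ A ∧ p.2 ∉ B} := hgA.inter (measurable_snd hB.compl)
      have h0 : ((P 0).prod (Measure.pi P')) {p | glue p.1 p.2 ∈ A ∧ p.2 ∉ B} = 0 := by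
        rw [Measure.prod_apply_symm hC, lintegral_eq_zero_iff
          (measurable_measure_prodMk_right (μ := P 0) hC)]
        refine Filter.Eventually.of_forall fun x => ?_
        by_cases hx : x ∈ B
        · have : ((fun w => (w, x)) ⁻¹' {p : Ω 0 × (∀ j, Ω ((0 : Fin (n + 1)).succAbove j)) |
            glue p.1 p.2 ∈ A ∧ p.2 ∉ B}) = ∅ :=
            Set.eq_empty_of_forall_notMem fun w hw => hw.2 hx
          exact (congrArg (P 0) this).trans measure_empty
        · have hx' : (P 0) {w | glue w x ∈ A} = 0 := not_not.1 hx
          exact measure_mono_null (fun w hw => hw.1) hx'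
      have h1 := (Measure.measure_prod_null hC).1 h0
      filter_upwards [h1] with w hw
      calc (Measure.pi P') (S w) ≤ (Measure.pi P')
            (B ∪ (Prod.mk w ⁻¹' {p | glue p.1 p.2 ∈ A ∧ p.2 ∉ B})) := by
            refine measure_mono fun x hx => ?_
            by_cases hxB : x ∈ B
            · exact Or.inl hxB
            · exact Or.inr ⟨hx, hxB⟩
        _ ≤ (Measure.pi P') B + 0 := by
            refine (measure_union_le _ _).trans ?_
            gcongr
            exact hw.le
        _ = _ := add_zero _
    have hB0 : (Measure.pi P') B ≠ 0 := by
      intro h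
      apply hm0
      rw [hmA, lintegral_eq_zero_iff hSm]
      filter_upwards [hSB] with w hw
      rw [h] at hw
      exact le_antisymm hw bot_le
    -- recursion of the hit sets
    have hrec1 : ∀ w x, ∀ u ∈ talW P' (S w) x,
        (0 : Fin (n + 1)).insertNth (α := fun _ => Bool) false u ∈ talW P A (glue w x) := by
      intro w x u hu
      change (Measure.pi P') {y | talMerge u x y ∈ S w} ≠ 0 at hu
      have hmeas : MeasurableSet {y | talMerge
          ((0 : Fin (n + 1)).insertNth (α := fun _ => Bool) false u) (glue w x) y ∈ A} :=
        ((measurable_talMerge (Ω := Ω) _).comp (measurable_prodMk_left (x := glue w x))) hA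
      change Measure.pi P {y | talMerge
          ((0 : Fin (n + 1)).insertNth (α := fun _ => Bool) false u) (glue w x) y ∈ A} ≠ 0
      rw [pi_glue P _ hmeas]
      have : ∀ w', {y | glue w' y ∈ {y | talMerge
          ((0 : Fin (n + 1)).insertNth (α := fun _ => Bool) false u) (glue w x) y ∈ A}} =
          {y | talMerge u x y ∈ S w} := by
        intro w'; ext y
        simp only [Set.mem_ofPred_eq, talMerge_glue, S]
        simp
      simp only [this]
      rw [lintegral_const, measure_univ, mul_one]
      exact hu
    have hrec2 : ∀ w x, ∀ u ∈ talW P' B x,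
        (0 : Fin (n + 1)).insertNth (α := fun _ => Bool) true u ∈ talW P A (glue w x) := by
      intro w x u hu
      change (Measure.pi P') {y | talMerge u x y ∈ B} ≠ 0 at hu
      have hmeas : MeasurableSet {y | talMerge
          ((0 : Fin (n + 1)).insertNth (α := fun _ => Bool) true u) (glue w x) y ∈ A} :=
        ((measurable_talMerge (Ω := Ω) _).comp (measurable_prodMk_left (x := glue w x))) hA
      change Measure.pi P {y | talMerge
          ((0 : Fin (n + 1)).insertNth (α := fun _ => Bool) true u) (glue w x) y ∈ A} ≠ 0
      rw [pi_glue_symm P _ hmeas]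
      have : ∀ y, {w' | glue w' y ∈ {y | talMerge
          ((0 : Fin (n + 1)).insertNth (α := fun _ => Bool) true u) (glue w x) y ∈ A}} =
          {w' | glue w' (talMerge u x y) ∈ A} := by
        intro y; ext w'
        simp only [Set.mem_ofPred_eq, talMerge_glue]
        simp
      simp only [this]
      have hmm : Measurable fun y => (P 0) {w' | glue w' (talMerge u x y) ∈ A} :=
        hBm.comp ((measurable_talMerge u).comp (measurable_prodMk_left (x := x)))
      intro h0
      rw [lintegral_eq_zero_iff hmm] at h0
      exact hu h0
    set b : ℝ := ((Measure.pi P') B).toReal with hb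
    have hbpos : 0 < b := ENNReal.toReal_pos hB0 (measure_ne_top _ _)
    have hdiv : ∀ (I m : ENNReal), m ≠ 0 → m ≠ ⊤ → I * m ≤ 1 →
        I ≤ ENNReal.ofReal (1 / m.toReal) := by
      intro I m h0 ht h
      rw [ENNReal.ofReal_div_of_pos (ENNReal.toReal_pos h0 ht), ENNReal.ofReal_toReal ht,
        ENNReal.ofReal_one]
      exact (ENNReal.le_div_iff_mul_le (Or.inl h0) (Or.inl ht)).2 h
    have hGm := measurable_talGW P A hA
    have hpoint : ∀ᵐ w ∂(P 0), ∫⁻ x, talG (talW P A (glue w x)) ∂(Measure.pi P') ≤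
        ENNReal.ofReal (1 / b * (2 - ((Measure.pi P') (S w)).toReal / b)) := by
      filter_upwards [hSB] with w hw
      refine tal_combine _ b ENNReal.toReal_nonneg
        (ENNReal.toReal_mono (measure_ne_top _ _) hw) hbpos _
        (∫⁻ x, talG (talW P' (S w) x) ∂(Measure.pi P'))
        (∫⁻ x, talG (talW P' B x) ∂(Measure.pi P')) ?_ ?_ ?_ ?_
      · intro h
        exact hdiv _ _ (fun h' => by rw [h'] at h; exact lt_irrefl _ h) (measure_ne_top _ _) (ih P' (S w) (hS w))
      · exact hdiv _ _ hB0 (measure_ne_top _ _) (ih P' B hB)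
      · rw [← lintegral_const_mul _ (measurable_talGW P' B hB)]
        exact lintegral_mono fun x => talG_step0 _ _ (talW_nonempty P' B hB0 x) (hrec2 w x)
      · intro h θ h0 h1
        have hSw : (Measure.pi P') (S w) ≠ 0 := fun h' => by rw [h'] at h; exact lt_irrefl _ h
        calc _ ≤ ∫⁻ x, ENNReal.ofReal (Real.exp ((1 - θ) ^ 2 / 4)) *
              (talG (talW P' (S w) x) ^ θ * talG (talW P' B x) ^ (1 - θ)) ∂(Measure.pi P') :=
              lintegral_mono fun x => talG_step _ _ _ (talW_nonempty P' (S w) hSw x)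
                (talW_nonempty P' B hB0 x) (hrec1 w x) (hrec2 w x) θ h0 h1
          _ = ENNReal.ofReal (Real.exp ((1 - θ) ^ 2 / 4)) *
              ∫⁻ x, (talG (talW P' (S w) x) ^ θ * talG (talW P' B x) ^ (1 - θ))
                ∂(Measure.pi P') := by
              rw [lintegral_const_mul]
              exact ((measurable_talGW P' _ (hS w)).pow_const _).mul
                ((measurable_talGW P' B hB).pow_const _)
          _ ≤ _ := by
              gcongr
              exact ENNReal.lintegral_mul_norm_pow_le
                (measurable_talGW P' _ (hS w)).aemeasurable
                (measurable_talGW P' B hB).aemeasurable h0 (sub_nonneg.2 h1) (by ring)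
    have hint : ∫⁻ x, talG (talW P A x) ∂(Measure.pi P) =
        ∫⁻ w, ∫⁻ x, talG (talW P A (glue w x)) ∂(Measure.pi P') ∂(P 0) := by
      rw [← (glue_mp P).lintegral_comp hGm]
      exact lintegral_prod _ (hGm.comp (glue_mp P).measurable).aemeasurable
    set m : ℝ := (Measure.pi P A).toReal with hm
    have hmint : ∫ w, ((Measure.pi P') (S w)).toReal ∂(P 0) = m := by
      rw [integral_toReal hSm.aemeasurable
        (Filter.Eventually.of_forall fun w => measure_lt_top _ _), hm, hmA]
    have hintble : Integrable (fun w => ((Measure.pi P') (S w)).toReal) (P 0) := by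
      refine integrable_toReal_of_lintegral_ne_top hSm.aemeasurable ?_
      rw [← hmA]; exact measure_ne_top _ _
    have hfin : ∫⁻ x, talG (talW P A x) ∂(Measure.pi P) ≤
        ENNReal.ofReal (1 / b * (2 - m / b)) := by
      rw [hint]
      refine (lintegral_mono_ae hpoint).trans ?_
      rw [← ofReal_integral_eq_lintegral_ofReal]
      · apply ENNReal.ofReal_le_ofReal
        rw [integral_const_mul, integral_sub (integrable_const _) (hintble.div_const _),
          integral_div, hmint]
        simp
      · exact ((integrable_const _).sub (hintble.div_const _)).const_mul _
      · filter_upwards [hSB] with w hw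
        have h1 : ((Measure.pi P') (S w)).toReal / b ≤ 1 :=
          (div_le_one hbpos).2 (ENNReal.toReal_mono (measure_ne_top _ _) hw)
        have : 0 ≤ 1 / b := by positivity
        exact mul_nonneg this (by linarith)
    calc _ ≤ ENNReal.ofReal (1 / b * (2 - m / b)) * ENNReal.ofReal m := by
          rw [hm, ENNReal.ofReal_toReal (measure_ne_top _ _)]
          gcongr
      _ = ENNReal.ofReal (1 / b * (2 - m / b) * m) := by
          rw [ENNReal.ofReal_mul' ENNReal.toReal_nonneg]
      _ ≤ 1 := by
          rw [← ENNReal.ofReal_one]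
          apply ENNReal.ofReal_le_ofReal
          have : 1 / b * (2 - m / b) * m = 1 - (1 - m / b) ^ 2 := by field_simp; ring
          rw [this]
          nlinarith [sq_nonneg (1 - m / b)]

theorem tal_sets {n : ℕ} {Ω : Fin n → Type*} [∀ i, MeasurableSpace (Ω i)]
    (P : ∀ i, Measure (Ω i)) [∀ i, IsProbabilityMeasure (P i)]
    (A B : Set (∀ i, Ω i)) (hA : MeasurableSet A)
    (s τ : ℝ) (hs : 0 < s) (hτ : 0 ≤ τ)
    (h : ∀ x ∈ B, ∃ I : Finset (Fin n), (I.card : ℝ) ≤ s ∧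
      ∀ y ∈ A, τ ≤ ({i : Fin n | i ∈ I ∧ x i ≠ y i}.ncard : ℝ)) :
    (Measure.pi P A).toReal * (Measure.pi P B).toReal ≤ Real.exp (-(τ ^ 2 / (4 * s))) := by
  have hGm := measurable_talGW P A hA
  have hsub : B ⊆ {x | ENNReal.ofReal (Real.exp (τ ^ 2 / (4 * s))) ≤ talG (talW P A x)} := by
    intro x hx
    obtain ⟨I, hI, hd⟩ := h x hx
    refine talG_lower _ I s τ hs hτ hI fun u hu => ?_
    obtain ⟨y, hy, hxy⟩ := talW_sound P A x u hu
    refine (hd y hy).trans ?_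
    classical
    have h1 : ∑ i ∈ I, bvec u i = ((I.filter fun i => u i = true).card : ℝ) := by
      simp [bvec, Finset.sum_boole]
    rw [h1, ← Set.ncard_coe_finset]
    refine Nat.cast_le.2 ?_
    refine Set.ncard_le_ncard (fun i hi => ?_) (Finset.finite_toSet _)
    simp only [Finset.coe_filter, Set.mem_ofPred_eq]
    exact ⟨hi.1, hxy i hi.2⟩
  have h1 := mul_meas_ge_le_lintegral (μ := Measure.pi P) hGm
    (ENNReal.ofReal (Real.exp (τ ^ 2 / (4 * s))))
  have h2 : ENNReal.ofReal (Real.exp (τ ^ 2 / (4 * s))) * Measure.pi P B * Measure.pi P A ≤ 1 := by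
    refine le_trans ?_ (tal_main P A hA)
    gcongr
    exact le_trans (mul_le_mul_right (measure_mono hsub) _) h1
  have h3 := ENNReal.toReal_mono ENNReal.one_ne_top h2
  rw [ENNReal.toReal_mul, ENNReal.toReal_mul, ENNReal.toReal_ofReal (Real.exp_pos _).le,
    ENNReal.toReal_one] at h3
  rw [Real.exp_neg, ← one_div, le_div_iff₀ (Real.exp_pos _)]
  linarith

lemma median_spec {α : Type*} [MeasurableSpace α] (μ : Measure α) [IsProbabilityMeasure μ]
    (X : α → ℝ) (hX : Measurable X) :
    1 / 2 ≤ μ.real {ω | X ω ≤ medianOf μ X} ∧ μ.real {ω | X ω < medianOf μ X} ≤ 1 / 2 := by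
  set S : Set ℝ := {t : ℝ | μ {ω | X ω ≤ t} ≤ 1 / 2} with hS
  set M := medianOf μ X with hM
  have hhalf : (1 / 2 : ENNReal).toReal = 1 / 2 := by simp
  have hhalf' : (1 / 2 : ENNReal) ≠ ⊤ := by simp
  have hcdf : ∀ t, ProbabilityTheory.cdf (μ.map X) t = μ.real {ω | X ω ≤ t} := by
    intro t
    have := Measure.isProbabilityMeasure_map (μ := μ) hX.aemeasurable
    rw [ProbabilityTheory.cdf_eq_real, map_measureReal_apply hX measurableSet_Iic]
    rfl
  have hmem : ∀ t, t ∈ S ↔ ProbabilityTheory.cdf (μ.map X) t ≤ 1 / 2 := by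
    intro t
    rw [hcdf, measureReal_def, ← hhalf, ENNReal.toReal_le_toReal (measure_ne_top _ _) hhalf']
    rfl
  have hne : S.Nonempty := by
    obtain ⟨t, ht⟩ := ((ProbabilityTheory.tendsto_cdf_atBot (μ.map X)).eventually
      (gt_mem_nhds (show (0 : ℝ) < 1 / 2 by norm_num))).exists
    exact ⟨t, (hmem t).2 ht.le⟩
  have hbdd : BddAbove S := by
    obtain ⟨t, ht⟩ := ((ProbabilityTheory.tendsto_cdf_atTop (μ.map X)).eventually
      (lt_mem_nhds (show (1 / 2 : ℝ) < 1 by norm_num))).exists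
    refine ⟨t, fun r hr => ?_⟩
    by_contra hlt
    push Not at hlt
    have := ProbabilityTheory.monotone_cdf (μ.map X) hlt.le
    have := (hmem r).1 hr
    linarith
  constructor
  · rw [← hcdf]
    have hr := (ProbabilityTheory.cdf (μ.map X)).right_continuous M
    have ht : Filter.Tendsto (ProbabilityTheory.cdf (μ.map X)) (nhdsWithin M (Set.Ioi M))
      (nhds (ProbabilityTheory.cdf (μ.map X) M)) := hr.mono_left
        (nhdsWithin_mono _ Set.Ioi_subset_Ici_self)
    refine ge_of_tendsto ht ?_
    filter_upwards [self_mem_nhdsWithin] with r hr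
    by_contra hlt
    push Not at hlt
    exact absurd (le_csSup hbdd ((hmem r).2 hlt.le)) (not_le.2 hr)
  · rw [measureReal_def, ← hhalf]
    refine ENNReal.toReal_mono hhalf' ?_
    obtain ⟨v, hv, hlt, hlim⟩ := exists_seq_strictMono_tendsto M
    have hU : {ω | X ω < M} = ⋃ k, {ω | X ω ≤ v k} := by
      ext ω
      simp only [Set.mem_ofPred_eq, Set.mem_iUnion]
      constructor
      · intro h
        obtain ⟨k, hk⟩ := (hlim.eventually (lt_mem_nhds h)).exists
        exact ⟨k, hk.le⟩
      · rintro ⟨k, hk⟩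
        exact hk.trans_lt (hlt k)
    have hmono : Monotone fun k => {ω | X ω ≤ v k} :=
      fun i j hij ω (h : X ω ≤ v i) => h.trans (hv.monotone hij)
    rw [hU]
    refine le_of_tendsto (tendsto_measure_iUnion_atTop hmono)
      (Filter.Eventually.of_forall fun k => ?_)
    obtain ⟨r, hr, hkr⟩ := exists_lt_of_lt_csSup hne (hlt k)
    exact (measure_mono fun ω (h : X ω ≤ v k) => h.trans hkr.le).trans hr

/-- Talagrand's inequality with exceptional outcomes: on a product of `n` probability
spaces, if `X` has upward `(s,c)`-certificates with respect to the exceptional set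
`Ωstar`, then `P[|X − med(X)| ≥ t] ≤ 4·e^{−t²/(4c²s)} + 4·P[Ωstar]`. -/
theorem talagrand_with_exceptions {n : ℕ} {Ω : Fin n → Type*}
    [∀ i, MeasurableSpace (Ω i)] (P : ∀ i, Measure (Ω i))
    [∀ i, IsProbabilityMeasure (P i)]
    (Ωstar : Set (∀ i, Ω i)) (hΩstar : MeasurableSet Ωstar)
    (X : (∀ i, Ω i) → ℝ) (hX : Measurable X)
    (s c : ℝ) (hs : 0 < s) (hc : 0 < c)
    (hcert : HasUpwardCertificates Ωstar X s c) (t : ℝ) (ht : 0 ≤ t) :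
    ((Measure.pi P) {ω | t ≤ |X ω - medianOf (Measure.pi P) X|}).toReal ≤
      4 * Real.exp (-(t ^ 2) / (4 * c ^ 2 * s)) + 4 * ((Measure.pi P) Ωstar).toReal := by
  have hp0 : 0 ≤ ((Measure.pi P) Ωstar).toReal := ENNReal.toReal_nonneg
  rcases ht.eq_or_lt with rfl | ht
  · have h1 : ((Measure.pi P) {ω | 0 ≤ |X ω - medianOf (Measure.pi P) X|}).toReal ≤ 1 :=
      measureReal_le_one
    have : Real.exp (-(0 ^ 2) / (4 * c ^ 2 * s)) = 1 := by simp
    rw [this]; linarith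
  set μ := Measure.pi P with hμ
  set M := medianOf μ X with hM
  set E := Real.exp (-(t ^ 2) / (4 * c ^ 2 * s)) with hE
  obtain ⟨hm1, hm2⟩ := median_spec μ X hX
  rw [← hM] at hm1 hm2
  change μ.real _ ≤ 4 * E + 4 * μ.real Ωstar
  change 0 ≤ μ.real Ωstar at hp0
  have key : ∀ a : ℝ, μ.real ({ω | X ω ≤ a} \ Ωstar) * μ.real ({ω | a + t ≤ X ω} \ Ωstar) ≤ E := by
    intro a
    have := tal_sets P ({ω | X ω ≤ a} \ Ωstar) ({ω | a + t ≤ X ω} \ Ωstar)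
      ((hX measurableSet_Iic).diff hΩstar) s (t / c) hs (by positivity) ?_
    · refine this.trans (le_of_eq ?_)
      rw [hE]; congr 1; field_simp
    · rintro x ⟨hx, hx'⟩
      obtain ⟨I, hI, h⟩ := hcert t ht x hx'
      refine ⟨I, hI, ?_⟩
      rintro y ⟨hy, hy'⟩
      by_contra hlt
      push Not at hlt
      have := h y hy' hlt
      simp only [Set.mem_ofPred_eq] at hx hy
      linarith
  have hdiff : ∀ S : Set (∀ i, Ω i), μ.real S ≤ μ.real (S \ Ωstar) + μ.real Ωstar := by
    intro S
    calc μ.real S ≤ μ.real ((S \ Ωstar) ∪ Ωstar) :=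
          measureReal_mono (by rw [Set.sdiff_union_self]; exact Set.subset_union_left)
      _ ≤ _ := measureReal_union_le _ _
  have arith : ∀ x y : ℝ, 0 ≤ y → y ≤ 1 / 2 → 1 / 2 ≤ x + μ.real Ωstar → x * y ≤ E →
      y ≤ 2 * E + μ.real Ωstar := by
    intro x y h0 h1 h2 h3
    nlinarith [mul_le_mul_of_nonneg_right h2 h0, mul_le_mul_of_nonneg_left h1 hp0]
  have hge : 1 / 2 ≤ μ.real {ω | M ≤ X ω} := by
    have h := probReal_compl_eq_one_sub (μ := μ) (measurableSet_lt hX (measurable_const (a := M)))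
    have e : {ω | X ω < M}ᶜ = {ω | M ≤ X ω} := by ext; simp
    rw [e] at h; linarith
  have hgt : μ.real {ω | M + t ≤ X ω} ≤ 1 / 2 := by
    have h := probReal_compl_eq_one_sub (μ := μ) (measurableSet_le hX (measurable_const (a := M)))
    have e : {ω | M + t ≤ X ω} ⊆ {ω | X ω ≤ M}ᶜ := by
      intro ω hω
      simp only [Set.mem_ofPred_eq, Set.mem_compl_iff, not_le] at hω ⊢
      linarith
    have := measureReal_mono (μ := μ) e
    linarith
  have hlt : μ.real {ω | X ω ≤ M - t} ≤ 1 / 2 := by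
    refine le_trans (measureReal_mono ?_) hm2
    intro ω hω
    simp only [Set.mem_ofPred_eq] at hω ⊢
    linarith
  have hU := arith _ _ measureReal_nonneg ((measureReal_mono Set.sdiff_subset).trans hgt)
    (hm1.trans (hdiff _)) (key M)
  have k2 := key (M - t)
  rw [sub_add_cancel, mul_comm] at k2
  have hL := arith _ _ measureReal_nonneg ((measureReal_mono Set.sdiff_subset).trans hlt)
    (hge.trans (hdiff _)) k2
  have hsub : {ω | t ≤ |X ω - M|} ⊆ {ω | M + t ≤ X ω} ∪ {ω | X ω ≤ M - t} := by
    intro ω hω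
    simp only [Set.mem_ofPred_eq, Set.mem_union] at hω ⊢
    rcases le_abs.1 hω with h | h
    · left; linarith
    · right; linarith
  have h1 := (measureReal_mono (μ := μ) hsub).trans (measureReal_union_le _ _)
  have h2 := hdiff {ω | M + t ≤ X ω}
  have h3 := hdiff {ω | X ω ≤ M - t}
  linarith
end

section
/- Let (Ω_i, Σ_i, P_i), i = 1,…,n, be probability spaces and let (Ω, Σ, P) be their product space. Let Ω* ⊆ Ω be a set of exceptional events, let X : Ω → ℝ be a random variable, let M = max{sup|X|, 1}, and let c ≥ 1. If X has upward (s,c)-certificates with respect to Ω*, then |E[X] − med(X)| ≤ 20·c·√s + 20·M²·P[Ω*]. -/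
open MeasureTheory

open scoped symmDiff in
lemma cube_sum_symm {n : ℕ} (V : Finset (Fin n)) (f : Finset (Fin n) → ℝ) :
    ∑ x, f (x ∆ V) = ∑ x, f x := by
  refine Fintype.sum_equiv (Function.Involutive.toPerm (fun x => x ∆ V) ?_) _ _ (fun x => rfl)
  intro x; simp

open scoped symmDiff in
lemma cube_poincare {n : ℕ} (V : Finset (Fin n)) : ∀ g : Finset (Fin n) → ℝ,
    ∑ x, (g x - g (x ∆ V)) ^ 2 ≤ ∑ i ∈ V, ∑ x, (g x - g (x ∆ {i})) ^ 2 := by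
  induction V using Finset.induction_on with
  | empty =>
    intro g
    rw [Finset.sum_empty]
    refine le_of_eq (Finset.sum_eq_zero fun x _ => ?_)
    rw [← Finset.bot_eq_empty, symmDiff_bot]; simp
  | insert i V hi ih =>
    intro g
    rw [Finset.sum_insert hi]
    have hins : insert i V = {i} ∆ V := by
      ext j; simp only [Finset.mem_insert, Finset.mem_symmDiff, Finset.mem_singleton]
      constructor
      · rintro (rfl | h)
        · exact Or.inl ⟨rfl, hi⟩
        · exact Or.inr ⟨h, fun e => hi (e ▸ h)⟩
      · tauto
    set h : Finset (Fin n) → ℝ := fun x => (g x + g (x ∆ {i})) / 2 with hh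
    set d : Finset (Fin n) → ℝ := fun x => (g x - g (x ∆ {i})) / 2 with hd
    have comm : ∀ x a b : Finset (Fin n), x ∆ a ∆ b = x ∆ b ∆ a := fun x a b =>
      symmDiff_right_comm x a b
    have e1 : ∀ x, (g x - g (x ∆ (insert i V))) ^ 2 =
        (h x - h (x ∆ V)) ^ 2 + (d x + d (x ∆ V)) ^ 2
          + 2 * ((h x - h (x ∆ V)) * (d x + d (x ∆ V))) := by
      intro x
      rw [hins, ← symmDiff_assoc]
      simp only [hh, hd]
      rw [comm x {i} V]; ring
    have cross : ∑ x, (h x - h (x ∆ V)) * (d x + d (x ∆ V)) = 0 := by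
      have := cube_sum_symm V (fun x => (h x - h (x ∆ V)) * (d x + d (x ∆ V)))
      simp only [symmDiff_assoc, symmDiff_self, symmDiff_bot] at this
      have h2 : ∑ x, (h (x ∆ V) - h x) * (d (x ∆ V) + d x)
          = - ∑ x, (h x - h (x ∆ V)) * (d x + d (x ∆ V)) := by
        rw [← Finset.sum_neg_distrib]; refine Finset.sum_congr rfl fun x _ => by ring
      linarith
    have hpart : ∑ x, (h x - h (x ∆ V)) ^ 2 ≤ ∑ j ∈ V, ∑ x, (g x - g (x ∆ {j})) ^ 2 := by
      refine (ih h).trans (Finset.sum_le_sum fun j _ => ?_)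
      have hs := cube_sum_symm {i} (fun x => (g x - g (x ∆ {j})) ^ 2)
      have : ∑ x, (h x - h (x ∆ {j})) ^ 2 ≤
          ∑ x, ((g x - g (x ∆ {j})) ^ 2 / 2 + (g (x ∆ {i}) - g (x ∆ {i} ∆ {j})) ^ 2 / 2) := by
        refine Finset.sum_le_sum fun x _ => ?_
        simp only [hh]
        rw [comm x {j} {i}]
        nlinarith [sq_nonneg ((g x - g (x ∆ {j})) - (g (x ∆ {i}) - g (x ∆ {i} ∆ {j})))]
      rw [Finset.sum_add_distrib, ← Finset.sum_div, ← Finset.sum_div, hs] at this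
      linarith
    have dpart : ∑ x, (d x + d (x ∆ V)) ^ 2 ≤ ∑ x, (g x - g (x ∆ {i})) ^ 2 := by
      have hs := cube_sum_symm V (fun x => (d x) ^ 2)
      have : ∑ x, (d x + d (x ∆ V)) ^ 2 ≤ ∑ x, (2 * (d x) ^ 2 + 2 * (d (x ∆ V)) ^ 2) :=
        Finset.sum_le_sum fun x _ => by nlinarith [sq_nonneg (d x - d (x ∆ V))]
      rw [Finset.sum_add_distrib, ← Finset.mul_sum, ← Finset.mul_sum, hs] at this
      have h4 : ∑ x, (g x - g (x ∆ {i})) ^ 2 = 4 * ∑ x, d x ^ 2 := by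
        rw [Finset.mul_sum]; refine Finset.sum_congr rfl fun x _ => by simp only [hd]; ring
      linarith
    simp only [e1, Finset.sum_add_distrib, ← Finset.mul_sum]
    rw [cross]; linarith

open scoped symmDiff in
lemma cube_count {n : ℕ} (A B : Finset (Finset (Fin n))) (I : Finset (Fin n) → Finset (Fin n))
    (s r : ℝ) (hs : 0 ≤ s) (hr : 0 < r) (hI : ∀ b ∈ B, ((I b).card : ℝ) ≤ s)
    (hAB : ∀ b ∈ B, ∀ a ∈ A, r ≤ ((I b ∩ (b ∆ a)).card : ℝ)) :
    (((Finset.univ.filter fun x => x ∈ B ∧ xᶜ ∈ A).card : ℕ) : ℝ) * r ^ 2 ≤ 2 ^ n * s := by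
  rcases B.eq_empty_or_nonempty with rfl | hB
  · simp; positivity
  have hex : ∀ y : Finset (Fin n), ∃ b ∈ B, ∀ b' ∈ B,
      ((I b ∩ (b ∆ y)).card) ≤ ((I b' ∩ (b' ∆ y)).card) := fun y =>
    B.exists_min_image (fun b => (I b ∩ (b ∆ y)).card) hB
  choose β hβB hβ using hex
  set φ : Finset (Fin n) → ℝ := fun y => ((I (β y) ∩ (β y ∆ y)).card : ℝ) with hφ
  have hstep : ∀ y i, φ (y ∆ {i}) - φ y ≤ if i ∈ I (β y) then 1 else 0 := by
    intro y i
    have h1 : φ (y ∆ {i}) ≤ ((I (β y) ∩ (β y ∆ (y ∆ {i}))).card : ℝ) := by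
      simp only [hφ]; exact_mod_cast hβ (y ∆ {i}) (β y) (hβB y)
    have hsub : I (β y) ∩ (β y ∆ (y ∆ {i})) ⊆ (I (β y) ∩ (β y ∆ y)) ∪ (I (β y) ∩ {i}) := by
      intro j; simp only [Finset.mem_inter, Finset.mem_union, Finset.mem_symmDiff,
        Finset.mem_singleton]; tauto
    have h2 := (Finset.card_le_card hsub).trans (Finset.card_union_le _ _)
    have h3 : (I (β y) ∩ {i}).card = if i ∈ I (β y) then 1 else 0 := by
      split_ifs with h <;> simp [h]
    rw [h3] at h2
    have h2' : ((I (β y) ∩ (β y ∆ (y ∆ {i}))).card : ℝ) ≤ φ y + if i ∈ I (β y) then 1 else 0 := by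
      simp only [hφ]; exact_mod_cast h2
    linarith
  have hedge : ∑ i, ∑ x, (φ x - φ (x ∆ {i})) ^ 2 ≤ 2 * (2 ^ n * s) := by
    have : ∀ i, ∑ x, (φ x - φ (x ∆ {i})) ^ 2 ≤ 2 * ∑ x, if i ∈ I (β x) then (1:ℝ) else 0 := by
      intro i
      have hs := cube_sum_symm {i} (fun x => if i ∈ I (β x) then (1:ℝ) else 0)
      rw [two_mul]; nth_rewrite 1 [← hs]
      rw [← Finset.sum_add_distrib]
      refine Finset.sum_le_sum fun x _ => ?_
      have a1 := hstep x i
      have a2 := hstep (x ∆ {i}) i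
      simp only [symmDiff_assoc, symmDiff_self, symmDiff_bot] at a2
      split_ifs at a1 a2 ⊢ <;> nlinarith
    refine (Finset.sum_le_sum fun i _ => this i).trans ?_
    rw [← Finset.mul_sum, Finset.sum_comm]
    have h5 : ∀ x, ∑ i, (if i ∈ I (β x) then (1:ℝ) else 0) ≤ s := by
      intro x; simpa using hI _ (hβB x)
    have := Finset.sum_le_sum (s := Finset.univ) fun x _ => h5 x
    simp only [Finset.sum_const, Finset.card_univ, Fintype.card_finset, Fintype.card_fin,
      nsmul_eq_mul] at this
    push_cast at this
    linarith
  have hP := (cube_poincare Finset.univ φ).trans hedge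
  have hφB : ∀ b ∈ B, φ b = 0 := by
    intro b hb
    have := hβ b b hb
    simp at this
    simp [hφ, this]
  have hφA : ∀ a ∈ A, r ≤ φ a := fun a ha => hAB _ (hβB a) a ha
  have hlow : 2 * ((((Finset.univ.filter fun x => x ∈ B ∧ xᶜ ∈ A).card : ℕ) : ℝ) * r ^ 2) ≤
      ∑ x, (φ x - φ (x ∆ Finset.univ)) ^ 2 := by
    have hs := cube_sum_symm Finset.univ (fun x => if x ∈ B ∧ xᶜ ∈ A then r ^ 2 else 0)
    have hc : ((((Finset.univ.filter fun x => x ∈ B ∧ xᶜ ∈ A).card : ℕ) : ℝ) * r ^ 2) =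
      ∑ x, if x ∈ B ∧ xᶜ ∈ A then r ^ 2 else 0 := by
      rw [← Finset.sum_filter]; simp
    have hu : ∀ x : Finset (Fin n), x ∆ Finset.univ = xᶜ := fun x => by
      ext i; simp [Finset.mem_symmDiff]
    rw [hc, two_mul]; nth_rewrite 1 [← hs]
    rw [← Finset.sum_add_distrib]
    refine Finset.sum_le_sum fun x _ => ?_
    rw [hu, compl_compl]
    split_ifs with h1 h2 h2
    · have := hφB _ h1.1; have := hφA _ h2.2; have := hφB _ h2.1; linarith
    · have := hφB _ h1.1; have := hφA _ h1.2; nlinarith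
    · have := hφB _ h2.1; have := hφA _ h2.2; nlinarith
    · nlinarith [sq_nonneg (φ x - φ xᶜ)]
  linarith

def mixPt {n : ℕ} {Ω : Fin n → Type*} (S : Finset (Fin n)) (p : (∀ i, Ω i) × (∀ i, Ω i)) :
    ∀ i, Ω i := fun i => if i ∈ S then p.1 i else p.2 i

lemma measurable_mixPt {n : ℕ} {Ω : Fin n → Type*} [∀ i, MeasurableSpace (Ω i)]
    (S : Finset (Fin n)) : Measurable (mixPt (Ω := Ω) S) := by
  refine measurable_pi_iff.2 fun i => ?_
  unfold mixPt
  by_cases h : i ∈ S <;> simp only [h, if_true, if_false] <;> fun_prop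

lemma mp_mix {n : ℕ} {Ω : Fin n → Type*}
    [∀ i, MeasurableSpace (Ω i)] (P : ∀ i, Measure (Ω i))
    [∀ i, IsProbabilityMeasure (P i)] (S : Finset (Fin n)) :
    MeasurePreserving (fun p : (∀ i, Ω i) × (∀ i, Ω i) => (mixPt S p, mixPt Sᶜ p))
      ((Measure.pi P).prod (Measure.pi P)) ((Measure.pi P).prod (Measure.pi P)) := by
  have hm : Measurable (fun p : (∀ i, Ω i) × (∀ i, Ω i) => (mixPt S p, mixPt Sᶜ p)) :=
    (measurable_mixPt S).prodMk (measurable_mixPt Sᶜ)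
  refine ⟨hm, ?_⟩
  symm
  refine Measure.prod_eq_generateFrom generateFrom_pi generateFrom_pi isPiSystem_pi isPiSystem_pi
    (Measure.FiniteSpanningSetsIn.pi fun i ↦ (P i).toFiniteSpanningSetsIn)
    (Measure.FiniteSpanningSetsIn.pi fun i ↦ (P i).toFiniteSpanningSetsIn) ?_
  rintro _ ⟨s, hs, rfl⟩ _ ⟨t, ht, rfl⟩
  simp only [Set.mem_pi, Set.mem_univ, true_imp_iff, Set.mem_ofPred_eq] at hs ht
  rw [Measure.map_apply hm ((MeasurableSet.univ_pi hs).prod (MeasurableSet.univ_pi ht))]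
  have : (fun p : (∀ i, Ω i) × (∀ i, Ω i) => (mixPt S p, mixPt Sᶜ p)) ⁻¹'
      (Set.univ.pi s ×ˢ Set.univ.pi t) =
      (Set.univ.pi fun i => if i ∈ S then s i else t i) ×ˢ
      (Set.univ.pi fun i => if i ∈ S then t i else s i) := by
    ext p
    simp only [Set.mem_preimage, Set.mem_prod, Set.mem_pi, Set.mem_univ, true_imp_iff, mixPt,
      Finset.mem_compl, ← forall_and]
    refine forall_congr' fun i => ?_
    by_cases h : i ∈ S <;> simp [h, and_comm]
  rw [this, Measure.prod_prod, Measure.pi_pi, Measure.pi_pi, Measure.pi_pi, Measure.pi_pi,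
    ← Finset.prod_mul_distrib, ← Finset.prod_mul_distrib]
  refine Finset.prod_congr rfl fun i _ => ?_
  by_cases h : i ∈ S <;> simp [h, mul_comm]

open scoped symmDiff in
lemma pair_bound {n : ℕ} {Ω : Fin n → Type*}
    [∀ i, MeasurableSpace (Ω i)] (P : ∀ i, Measure (Ω i))
    [∀ i, IsProbabilityMeasure (P i)] (A B : Set (∀ i, Ω i)) (hA : MeasurableSet A)
    (hB : MeasurableSet B) (s r : ℝ) (hs : 0 ≤ s) (hr : 0 < r)
    (h : ∀ ω ∈ B, ∃ I : Finset (Fin n), (I.card : ℝ) ≤ s ∧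
      ∀ ω' ∈ A, r ≤ ({i : Fin n | i ∈ I ∧ ω i ≠ ω' i}.ncard : ℝ)) :
    (Measure.pi P).real B * (Measure.pi P).real A ≤ s / r ^ 2 := by
  classical
  set μ := Measure.pi P
  have hpt : ∀ p : (∀ i, Ω i) × (∀ i, Ω i),
      ∑ S : Finset (Fin n), (B ×ˢ A).indicator (fun _ => (1:ℝ)) (mixPt S p, mixPt Sᶜ p)
        ≤ 2 ^ n * (s / r ^ 2) := by
    intro p
    have h' : ∀ S : Finset (Fin n), ∃ I : Finset (Fin n), mixPt S p ∈ B → (I.card : ℝ) ≤ s ∧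
      ∀ ω' ∈ A, r ≤ ({i : Fin n | i ∈ I ∧ mixPt S p i ≠ ω' i}.ncard : ℝ) := by
      intro S
      by_cases hS : mixPt S p ∈ B
      · obtain ⟨I, hI⟩ := h _ hS; exact ⟨I, fun _ => hI⟩
      · exact ⟨∅, fun h => absurd h hS⟩
    choose I hI using h'
    have key := cube_count (Finset.univ.filter fun S => mixPt S p ∈ A)
      (Finset.univ.filter fun S => mixPt S p ∈ B) I s r hs hr
      (fun b hb => (hI b (by simpa using hb)).1) (by
        intro b hb a ha
        refine ((hI b (by simpa using hb)).2 _ (by simpa using ha)).trans ?_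
        rw [← Set.ncard_coe_finset]
        refine Nat.cast_le.2 ?_
        refine Set.ncard_le_ncard ?_ (Finset.finite_toSet _)
        rintro i ⟨hi, hne⟩
        simp only [Finset.coe_inter, Set.mem_inter_iff, Finset.mem_coe, Finset.mem_symmDiff]
        refine ⟨hi, ?_⟩
        by_contra hcon
        apply hne
        have : i ∈ b ↔ i ∈ a := by tauto
        simp [mixPt, this])
    simp only [Finset.mem_filter, Finset.mem_univ, true_and] at key
    have : ∑ S : Finset (Fin n), (B ×ˢ A).indicator (fun _ => (1:ℝ)) (mixPt S p, mixPt Sᶜ p)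
        = ((Finset.univ.filter fun x => mixPt x p ∈ B ∧ mixPt xᶜ p ∈ A).card : ℝ) := by
      simp [Set.indicator_apply]
    rw [this, ← mul_div_assoc, le_div_iff₀ (by positivity)]
    exact key
  have hint : ∀ S : Finset (Fin n), Integrable (fun p =>
      (B ×ˢ A).indicator (fun _ => (1:ℝ)) (mixPt S p, mixPt Sᶜ p)) (μ.prod μ) := fun S =>
    (mp_mix P S).integrable_comp_of_integrable
      ((integrable_const (1:ℝ)).indicator (hB.prod hA))
  have hval : ∀ S : Finset (Fin n), ∫ p,
      (B ×ˢ A).indicator (fun _ => (1:ℝ)) (mixPt S p, mixPt Sᶜ p) ∂(μ.prod μ)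
        = μ.real B * μ.real A := by
    intro S
    have h1 : ∫ q, (B ×ˢ A).indicator (fun _ => (1:ℝ)) q ∂(μ.prod μ) = μ.real B * μ.real A := by
      rw [integral_indicator_const _ (hB.prod hA), measureReal_prod_prod]; simp
    rw [← h1]
    conv_rhs => rw [← (mp_mix P S).map_eq]
    rw [integral_map (mp_mix P S).measurable.aemeasurable]
    exact (measurable_const.indicator (hB.prod hA)).aestronglyMeasurable
  have hI2 := integral_mono (μ := μ.prod μ) (integrable_finsetSum _ fun S _ => hint S)
    (integrable_const (2 ^ n * (s / r ^ 2))) hpt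
  rw [integral_finsetSum _ fun S _ => hint S] at hI2
  simp only [hval] at hI2
  simp at hI2
  exact hI2

lemma tail_bound {α : Type*} [MeasurableSpace α] (μ : Measure α) [IsProbabilityMeasure μ]
    (Y : α → ℝ) (hY : Measurable Y) (hY0 : ∀ x, 0 ≤ Y x) (L : ℝ) (hL : ∀ x, Y x ≤ L)
    (G : Set α) (hG : MeasurableSet G) (K : ℝ) (hK : 0 < K)
    (h : ∀ t, 0 < t → μ.real (G ∩ {x | t ≤ Y x}) ≤ K ^ 2 / t ^ 2) :
    ∫ x, Y x ∂μ ≤ 2 * K + L * μ.real Gᶜ := by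
  have hint : Integrable Y μ := by
    refine Integrable.of_bound hY.aestronglyMeasurable L (Filter.Eventually.of_forall fun x => ?_)
    rw [Real.norm_of_nonneg (hY0 x)]; exact hL x
  rw [← integral_add_compl hG hint]
  have h2 : ∫ x in Gᶜ, Y x ∂μ ≤ L * μ.real Gᶜ := by
    have := setIntegral_mono (s := Gᶜ) (μ := μ) hint.integrableOn (integrableOn_const (C := L)) hL
    simpa [mul_comm] using this
  have h1 : ∫ x in G, Y x ∂μ ≤ 2 * K := by
    rw [integral_eq_lintegral_of_nonneg_ae (Filter.Eventually.of_forall hY0)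
      hY.aestronglyMeasurable]
    refine ENNReal.toReal_le_of_le_ofReal (by positivity) ?_
    rw [lintegral_eq_lintegral_meas_le _ (Filter.Eventually.of_forall hY0) hY.aemeasurable,
      ← Set.Ioc_union_Ioi_eq_Ioi hK.le]
    refine (lintegral_union_le _ _ _).trans ?_
    rw [two_mul, ENNReal.ofReal_add hK.le hK.le]
    refine add_le_add ?_ ?_
    · calc _ ≤ ∫⁻ t in Set.Ioc 0 K, 1 := by
            refine lintegral_mono fun t => ?_
            exact (measure_mono (Set.subset_univ _)).trans (by
              rw [Measure.restrict_apply_univ]; exact prob_le_one)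
        _ = _ := by simp
    · have hi : IntegrableOn (fun t : ℝ => K ^ 2 * t ^ (-2 : ℝ)) (Set.Ioi K) :=
        (integrableOn_Ioi_rpow_of_lt (by norm_num) hK).const_mul _
      have hv : ∫ t in Set.Ioi K, K ^ 2 * t ^ (-2 : ℝ) = K := by
        rw [integral_const_mul, integral_Ioi_rpow_of_lt (by norm_num) hK]
        norm_num [Real.rpow_neg_one]
        field_simp
      have hnn : ∀ t ∈ Set.Ioi K, 0 ≤ K ^ 2 * t ^ (-2 : ℝ) := fun t ht => by
        have : 0 < t := hK.trans ht
        positivity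
      calc _ ≤ ∫⁻ t in Set.Ioi K, ENNReal.ofReal (K ^ 2 * t ^ (-2 : ℝ)) := by
            refine setLIntegral_mono' measurableSet_Ioi fun t ht => ?_
            have ht0 : 0 < t := hK.trans ht
            rw [Measure.restrict_apply (measurableSet_le measurable_const hY), Set.inter_comm]
            have h3 := h t ht0
            rw [← ENNReal.ofReal_toReal (measure_ne_top μ (G ∩ {a | t ≤ Y a}))]
            refine ENNReal.ofReal_le_ofReal (h3.trans (le_of_eq ?_))
            rw [Real.rpow_neg ht0.le]; norm_cast
        _ = _ := by
            rw [← ofReal_integral_eq_lintegral_ofReal hi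
              (ae_restrict_of_forall_mem measurableSet_Ioi hnn), hv]
  linarith

lemma level_bound {n : ℕ} {Ω : Fin n → Type*}
    [∀ i, MeasurableSpace (Ω i)] (P : ∀ i, Measure (Ω i))
    [∀ i, IsProbabilityMeasure (P i)]
    (Ωstar : Set (∀ i, Ω i)) (hΩstar : MeasurableSet Ωstar)
    (X : (∀ i, Ω i) → ℝ) (hX : Measurable X)
    (s c : ℝ) (hs : 0 < s) (hc : 1 ≤ c)
    (hcert : HasUpwardCertificates Ωstar X s c) (a t : ℝ) (ht : 0 < t) :
    (Measure.pi P).real (Ωstarᶜ ∩ {ω | a + t ≤ X ω}) * (Measure.pi P).real (Ωstarᶜ ∩ {ω | X ω ≤ a})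
      ≤ c ^ 2 * s / t ^ 2 := by
  have hc0 : 0 < c := by linarith
  refine (pair_bound P _ _ (hΩstar.compl.inter (measurableSet_le hX measurable_const))
    (hΩstar.compl.inter (measurableSet_le measurable_const hX)) s (t / c) hs.le (by positivity)
    ?_).trans (le_of_eq ?_)
  · rintro ω ⟨h1, h2⟩
    obtain ⟨I, hI, hI2⟩ := hcert t ht ω h1
    refine ⟨I, hI, ?_⟩
    rintro ω' ⟨h3, h4⟩
    by_contra! hcon
    have h5 := hI2 ω' h3 hcon
    have h2' : a + t ≤ X ω := h2
    have h4' : X ω' ≤ a := h4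
    linarith
  · field_simp

/-- On a product of `n` probability spaces, if `X` is a bounded random variable with
upward `(s,c)`-certificates with respect to the exceptional set `Ωstar`, `c ≥ 1` and
`M = max {sup|X|, 1}`, then `|E[X] − med(X)| ≤ 20·c·√s + 20·M²·P[Ωstar]`. -/
theorem median_close_to_mean {n : ℕ} {Ω : Fin n → Type*}
    [∀ i, MeasurableSpace (Ω i)] (P : ∀ i, Measure (Ω i))
    [∀ i, IsProbabilityMeasure (P i)]
    (Ωstar : Set (∀ i, Ω i)) (hΩstar : MeasurableSet Ωstar)
    (X : (∀ i, Ω i) → ℝ) (hX : Measurable X)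
    (hbdd : BddAbove (Set.range fun ω => |X ω|))
    (M : ℝ) (hM : M = max (⨆ ω, |X ω|) 1)
    (s c : ℝ) (hs : 0 < s) (hc : 1 ≤ c)
    (hcert : HasUpwardCertificates Ωstar X s c) :
    |(∫ ω, X ω ∂(Measure.pi P)) - medianOf (Measure.pi P) X| ≤
      20 * c * Real.sqrt s + 20 * M ^ 2 * ((Measure.pi P) Ωstar).toReal := by
  have hlev := level_bound P Ωstar hΩstar X hX s c hs hc hcert
  have hc0 : 0 < c := by linarith
  have hM1 : 1 ≤ M := hM ▸ le_max_right _ _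
  have hXM : ∀ ω, |X ω| ≤ M := fun ω => hM ▸ (le_ciSup hbdd ω).trans (le_max_left _ _)
  clear hM hbdd hcert
  set μ := Measure.pi P
  have hint : Integrable X μ := by
    refine Integrable.of_bound hX.aestronglyMeasurable M (Filter.Eventually.of_forall hXM)
  change _ ≤ 20 * c * Real.sqrt s + 20 * M ^ 2 * μ.real Ωstar
  set p := μ.real Ωstar with hp
  have hp0 : 0 ≤ p := measureReal_nonneg
  set m := medianOf μ X with hm
  have hmS : ∀ a, M ≤ a → ¬ (μ {ω | X ω ≤ a} ≤ 1 / 2) := by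
    intro a ha
    have : {ω | X ω ≤ a} = Set.univ :=
      Set.eq_univ_of_forall fun ω => ((le_abs_self _).trans (hXM ω)).trans ha
    rw [this, measure_univ, not_le]
    exact ENNReal.div_lt_of_lt_mul (by norm_num)
  have hbd : BddAbove {t : ℝ | μ {ω | X ω ≤ t} ≤ 1 / 2} :=
    ⟨M, fun a ha => by by_contra! hcon; exact hmS a hcon.le ha⟩
  have hlowmem : ∀ a, a < -M → a ∈ {t : ℝ | μ {ω | X ω ≤ t} ≤ 1 / 2} := by
    intro a ha
    have : {ω | X ω ≤ a} = ∅ := Set.eq_empty_of_forall_notMem fun ω (h : X ω ≤ a) => by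
      have := (abs_le.1 (hXM ω)).1; linarith
    simp [this]
  have hmM : m ≤ M := csSup_le ⟨-M - 1, hlowmem _ (by linarith)⟩ fun a ha => by
    by_contra! hcon; exact hmS a hcon.le ha
  have hmM' : -M ≤ m := le_of_forall_lt fun a ha => by
    obtain ⟨b, hb1, hb2⟩ := exists_between ha
    exact hb1.trans_le (le_csSup hbd (hlowmem b hb2))
  -- probabilities
  have hup : ∀ a, m < a → 1 / 2 ≤ μ.real {ω | X ω ≤ a} := by
    intro a ha
    have : ¬ (μ {ω | X ω ≤ a} ≤ 1 / 2) := fun h => absurd (le_csSup hbd h) (not_le.2 ha)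
    rw [not_le] at this
    have := ENNReal.toReal_mono (measure_ne_top μ _) this.le
    simpa [Measure.real] using this
  have hdn : ∀ a, a < m → 1 / 2 ≤ μ.real {ω | a ≤ X ω} := by
    intro a ha
    obtain ⟨b, hb, hab⟩ := exists_lt_of_lt_csSup ⟨-M - 1, hlowmem _ (by linarith)⟩ ha
    have hb' : μ {ω | X ω ≤ b} ≤ 1 / 2 := hb
    have h1 : μ.real {ω | X ω ≤ b} ≤ 1 / 2 := by
      have := ENNReal.toReal_mono (by norm_num) hb'
      simpa [Measure.real] using this
    have h2 : μ.real {ω | X ω ≤ b}ᶜ = 1 - μ.real {ω | X ω ≤ b} :=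
      probReal_compl_eq_one_sub (measurableSet_le hX measurable_const)
    have h3 : μ.real {ω | X ω ≤ b}ᶜ ≤ μ.real {ω | a ≤ X ω} := by
      refine measureReal_mono fun ω hω => ?_
      have : ¬ (X ω ≤ b) := hω
      have : a ≤ X ω := by linarith
      exact this
    linarith
  have hsq : 0 < Real.sqrt s := Real.sqrt_pos.2 hs
  have hEM : |∫ ω, X ω ∂μ| ≤ M := by
    have := norm_integral_le_of_norm_le_const (μ := μ) (f := X) (C := M) (Filter.Eventually.of_forall hXM)
    simpa using this
  have hcs : 0 < c * Real.sqrt s := by positivity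
  rcases le_or_gt (1 / 4) p with hp4 | hp4
  · have := abs_le.1 hEM
    have h2 : |(∫ ω, X ω ∂μ) - m| ≤ 2 * M := abs_le.2 ⟨by linarith, by linarith⟩
    have h3 : 20 * M ^ 2 * (1 / 4) ≤ 20 * M ^ 2 * p := by gcongr
    nlinarith
  have hG : ∀ E : Set (∀ i, Ω i), 1 / 2 ≤ μ.real E → 1 / 4 ≤ μ.real (Ωstarᶜ ∩ E) := by
    intro E hE
    have : μ.real E ≤ μ.real (Ωstarᶜ ∩ E) + μ.real Ωstar :=
      (measureReal_mono (fun ω hω => by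
        by_cases h : ω ∈ Ωstar
        · exact Or.inr h
        · exact Or.inl ⟨h, hω⟩)).trans (measureReal_union_le _ _)
    linarith
  set K := 2 * (c * Real.sqrt s) with hK
  have hK2 : K ^ 2 = 4 * (c ^ 2 * s) := by
    rw [hK, mul_pow, mul_pow, Real.sq_sqrt hs.le]; norm_num
  have hfin : ∀ y, y ≤ 2 * K + 3 * M * p → y ≤ 20 * c * Real.sqrt s + 20 * M ^ 2 * p := by
    intro y hy
    have : M * p ≤ M ^ 2 * p := by gcongr; nlinarith
    nlinarith [mul_nonneg (sq_nonneg M) hp0]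
  have hfour : ∀ u v w : ℝ, 0 ≤ u → 1 / 4 ≤ v → u * v ≤ w → u ≤ 4 * w := by
    intro u v w hu hv huv; nlinarith
  refine abs_le.2 ⟨?_, ?_⟩
  · suffices h : m - ∫ ω, X ω ∂μ ≤ 20 * c * Real.sqrt s + 20 * M ^ 2 * p by linarith
    refine hfin _ (le_of_forall_pos_le_add fun ε hε => ?_)
    set e := min ε 1
    have he0 : 0 < e := lt_min hε one_pos
    have heε : e ≤ ε := min_le_left _ _
    have he1 : e ≤ 1 := min_le_right _ _
    have ha : m - e < m := by linarith
    have hT := tail_bound μ (fun ω => max (m - e - X ω) 0) (by fun_prop) (fun _ => le_max_right _ _)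
      (3 * M) (fun ω => max_le (by have := (abs_le.1 (hXM ω)).1; linarith) (by linarith))
      Ωstarᶜ hΩstar.compl K (by positivity) (by
        intro t ht
        have h1 := hlev (m - e - t) t ht
        rw [sub_add_cancel] at h1
        rw [mul_comm] at h1
        have h2 := hfour _ _ _ measureReal_nonneg (hG _ (hdn _ ha)) h1
        rw [hK2, mul_div_assoc]
        refine le_trans (measureReal_mono ?_) h2
        rintro ω ⟨hω, hω2⟩
        refine ⟨hω, ?_⟩
        have hω2' : t ≤ max (m - e - X ω) 0 := hω2
        rcases le_max_iff.1 hω2' with h | h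
        · have : X ω ≤ m - e - t := by linarith
          exact this
        · linarith)
    rw [compl_compl] at hT
    have hmono : ∫ ω, (m - e - X ω) ∂μ ≤ ∫ ω, max (m - e - X ω) 0 ∂μ := by
      have hi : Integrable (fun ω => m - e - X ω) μ := (integrable_const _).sub hint
      exact integral_mono hi hi.pos_part fun ω => le_max_left _ _
    rw [integral_sub (integrable_const _) hint] at hmono
    simp at hmono
    linarith
  · refine hfin _ (le_of_forall_pos_le_add fun ε hε => ?_)
    set e := min ε 1
    have he0 : 0 < e := lt_min hε one_pos
    have heε : e ≤ ε := min_le_left _ _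
    have he1 : e ≤ 1 := min_le_right _ _
    have ha : m < m + e := by linarith
    have hT := tail_bound μ (fun ω => max (X ω - (m + e)) 0) (by fun_prop)
      (fun _ => le_max_right _ _)
      (3 * M) (fun ω => max_le (by have := (abs_le.1 (hXM ω)).2; linarith) (by linarith))
      Ωstarᶜ hΩstar.compl K (by positivity) (by
        intro t ht
        have h1 := hlev (m + e) t ht
        have h2 := hfour _ _ _ measureReal_nonneg (hG _ (hup _ ha)) h1
        rw [hK2, mul_div_assoc]
        refine le_trans (measureReal_mono ?_) h2
        rintro ω ⟨hω, hω2⟩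
        refine ⟨hω, ?_⟩
        have hω2' : t ≤ max (X ω - (m + e)) 0 := hω2
        rcases le_max_iff.1 hω2' with h | h
        · have : m + e + t ≤ X ω := by linarith
          exact this
        · linarith)
    rw [compl_compl] at hT
    have hmono : ∫ ω, (X ω - (m + e)) ∂μ ≤ ∫ ω, max (X ω - (m + e)) 0 ∂μ := by
      have hi : Integrable (fun ω => X ω - (m + e)) μ := hint.sub (integrable_const _)
      exact integral_mono hi hi.pos_part fun ω => le_max_left _ _
    rw [integral_sub hint (integrable_const _)] at hmono
    simp at hmono
    linarith
end

section
/- Let (Ω_i, Σ_i, P_i), i = 1,…,n, be probability spaces and let (Ω, Σ, P) be their product space. Let Ω* ⊆ Ω be a set of exceptional events, let X : Ω → ℝ be a random variable, let M = max{sup|X|, 1}, and let c ≥ 1. If X has upward (s,c)-certificates with respect to Ω*, then for every t ≥ 0: P[ |X − E[X]| ≥ t + 20·c·√s + 20·M²·P[Ω*] ] ≤ 4·e^{−t²/(4c²s)} + 4·P[Ω*]. -/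
open MeasureTheory

section TalHelpers
open Classical

lemma tal_lemma (v : ℝ) (hv : 0 ≤ v) : ∃ l : ℝ, 0 ≤ l ∧ l ≤ 1 ∧
    l * v + (1 - l)^2 / 4 ≤ Real.log (2 - Real.exp (-v)) := by
  have key : ∀ x : ℝ, 0 ≤ x → Real.exp (-x) ≤ 1 - x + x^2/2 := by
    intro x hx
    have h1 := Real.quadratic_le_exp_of_nonneg hx
    have h2 : Real.exp (-x) * Real.exp x = 1 := by rw [← Real.exp_add]; simp
    have h3 := Real.exp_pos (-x)
    have h4 : 0 < 1 + x + x^2/2 := by positivity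
    have h5 : Real.exp (-x) * (1 + x + x^2/2) ≤ 1 := by
      exact (mul_le_mul_of_nonneg_left h1 h3.le).trans h2.le
    have h6 : 1 ≤ (1 - x + x^2/2) * (1 + x + x^2/2) := by nlinarith [sq_nonneg (x^2)]
    exact le_of_mul_le_mul_right (h5.trans h6) h4
  have eup : ∀ y : ℝ, 0 ≤ y → y ≤ 1/4 → Real.exp y ≤ 1 + y + y^2/2 + y^3/4 := by
    intro y h0 h1
    have := Real.exp_bound' h0 (by linarith) (n := 3) (by norm_num)
    norm_num [Finset.sum_range_succ, Nat.factorial] at this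
    nlinarith [pow_nonneg h0 3]
  by_cases h : v ≤ 1/2
  · refine ⟨1 - 2 * v, by linarith, by linarith, ?_⟩
    rw [Real.le_log_iff_exp_le]
    · have e1 := key v hv
      have e2 := eup (v - v^2) (by nlinarith) (by nlinarith [sq_nonneg (v - 1/2)])
      have : (1 - 2 * v) * v + (1 - (1 - 2 * v))^2/4 = v - v^2 := by ring
      rw [this]
      have e3 : (v - v^2)^3 ≤ v^3 := pow_le_pow_left₀ (by nlinarith) (by nlinarith) 3
      nlinarith [pow_nonneg hv 3, pow_nonneg hv 4]
    · have := Real.exp_le_one_iff.2 (neg_nonpos.2 hv); linarith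
  · refine ⟨0, le_rfl, by norm_num, ?_⟩
    push Not at h
    rw [Real.le_log_iff_exp_le]
    · have e1 := key (1/2) (by norm_num)
      have e2 := eup (1/4) (by norm_num) (by norm_num)
      have e3 : Real.exp (-v) ≤ Real.exp (-(1/2)) := Real.exp_le_exp.2 (by linarith)
      norm_num at e1 e2 ⊢
      linarith
    · have := Real.exp_le_one_iff.2 (neg_nonpos.2 hv); linarith

def RR {n : ℕ} {Ω : Fin n → Type*} (φ : (∀ i, Ω i) → ℝ) (ω : ∀ i, Ω i) (r : ℝ) : Prop :=
  ∃ β : Fin n → ℝ,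
    ∀ ω', r ≤ φ ω' + ∑ i, ((if ω' i ≠ ω i then β i / 2 else 0) - (β i)^2/4)

lemma integral_split {n : ℕ} {Ω : Fin (n+1) → Type*} [∀ i, MeasurableSpace (Ω i)]
    (P : ∀ i, Measure (Ω i)) [∀ i, IsProbabilityMeasure (P i)] (f : (∀ i, Ω i) → ℝ)
    (hf : Integrable f (Measure.pi P)) :
    ∫ ω, f ω ∂(Measure.pi P) = ∫ x, ∫ ω, f (Fin.insertNth 0 x ω) 
      ∂(Measure.pi fun j => P (Fin.succAbove 0 j)) ∂(P 0) := by
  have h := (measurePreserving_piFinSuccAbove P 0).symm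
  rw [← h.integral_comp (MeasurableEquiv.measurableEmbedding _)]
  rw [integral_prod]
  · rfl
  · exact (h.integrable_comp_emb (MeasurableEquiv.measurableEmbedding _)).2 hf

lemma meas_insert {n : ℕ} {Ω : Fin (n+1) → Type*} [∀ i, MeasurableSpace (Ω i)] :
   Measurable (fun p : Ω 0 × (∀ j, Ω (Fin.succAbove 0 j)) => (Fin.insertNth 0 p.1 p.2 : ∀ i, Ω i)) :=
  (MeasurableEquiv.piFinSuccAbove Ω 0).symm.measurable

lemma integrable_bdd {α : Type*} [MeasurableSpace α] (μ : Measure α) [IsProbabilityMeasure μ]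
   (f : α → ℝ) (hf : Measurable f) (C : ℝ) (hC : ∀ x, |f x| ≤ C) : Integrable f μ :=
  Integrable.of_bound hf.aestronglyMeasurable C (Filter.Eventually.of_forall hC)


lemma oneDim {α : Type*} [MeasurableSpace α] (μ : Measure α) [IsProbabilityMeasure μ]
    (K : Type) [Fintype K] (w : K → ℝ) (hw : ∀ k, 0 ≤ w k) (hw1 : ∑ k, w k = 1)
    (Λ : K → α → ℝ) (hΛ : ∀ k, Measurable (Λ k)) (C : ℝ) (hC : ∀ k x, |Λ k x| ≤ C)
    (G : α → ℝ) (hG : Integrable G μ)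
    (h : ∀ x, ∀ l : K → ℝ, (∀ k, 0 ≤ l k) → (∀ k, l k ≤ 1) → ∀ y : K → α,
      G x ≤ Real.exp (∑ k, w k * (l k * Λ k x + (1 - l k) * Λ k (y k) + (1 - l k)^2/4))) :
    ∫ x, G x ∂μ ≤ Real.exp (∑ k, w k * (-Real.log (∫ x, Real.exp (-Λ k x) ∂μ))) := by
  have hne : Nonempty α := nonempty_of_isProbabilityMeasure μ
  set m : K → ℝ := fun k => ⨅ x, Λ k x with hm
  have hbd : ∀ k, BddBelow (Set.range (Λ k)) := fun k =>
    ⟨-C, by rintro _ ⟨x, rfl⟩; exact (abs_le.1 (hC k x)).1⟩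
  have hmle : ∀ k x, m k ≤ Λ k x := fun k x => ciInf_le (hbd k) x
  have hint : ∀ k, Integrable (fun x => Real.exp (-Λ k x)) μ := fun k =>
    integrable_bdd μ _ (Real.measurable_exp.comp (hΛ k).neg) (Real.exp C) (fun x => by
      rw [abs_of_pos (Real.exp_pos _)]
      exact Real.exp_le_exp.2 (by have := (abs_le.1 (hC k x)).1; linarith))
  set F : K → ℝ := fun k => ∫ x, Real.exp (-Λ k x) ∂μ with hF
  have hFpos : ∀ k, 0 < F k := fun k => integral_exp_pos (hint k)
  have main : ∀ δ : ℝ, 0 < δ → ∫ x, G x ∂μ ≤ Real.exp (δ + ∑ k, w k * (-Real.log (F k))) := by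
    intro δ hδ
    have hy : ∀ k, ∃ y, Λ k y < m k + δ := fun k =>
      exists_lt_of_ciInf_lt (by simp only [hm]; linarith)
    choose y hy using hy
    set u : K → ℝ := fun k => Real.exp (m k) * F k with hu
    have pt : ∀ x, G x ≤ Real.exp (δ + ∑ k, w k * (-Real.log (F k))) *
        ∑ k, w k * (u k * (2 - Real.exp (m k) * Real.exp (-Λ k x))) := by
      intro x
      have hl : ∀ k, ∃ l : ℝ, 0 ≤ l ∧ l ≤ 1 ∧ l * (Λ k x - m k) + (1 - l)^2 / 4 ≤
        Real.log (2 - Real.exp (-(Λ k x - m k))) := fun k =>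
          tal_lemma _ (by linarith [hmle k x])
      choose l hl0 hl1 hl using hl
      refine (h x l hl0 hl1 y).trans ?_
      have hpos : ∀ k, 0 < 2 - Real.exp (-(Λ k x - m k)) := fun k => by
        have := Real.exp_le_one_iff.2 (neg_nonpos.2 (sub_nonneg.2 (hmle k x))); linarith
      have s1 : ∑ k, w k * (l k * Λ k x + (1 - l k) * Λ k (y k) + (1 - l k)^2/4) ≤
          (δ + ∑ k, w k * (-Real.log (F k))) +
          ∑ k, w k • (m k + Real.log (F k) + Real.log (2 - Real.exp (-(Λ k x - m k)))) := by
        have : δ = ∑ k, w k * δ := by rw [← Finset.sum_mul, hw1, one_mul]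
        rw [this, ← Finset.sum_add_distrib, ← Finset.sum_add_distrib]
        refine Finset.sum_le_sum fun k _ => ?_
        rw [smul_eq_mul, ← mul_add, ← mul_add]
        refine mul_le_mul_of_nonneg_left ?_ (hw k)
        have a1 := hl k
        have a2 : (1 - l k) * Λ k (y k) ≤ (1 - l k) * (m k + δ) :=
          mul_le_mul_of_nonneg_left (hy k).le (by linarith [hl1 k])
        nlinarith [hl0 k]
      refine (Real.exp_le_exp.2 s1).trans ?_
      rw [Real.exp_add]
      refine mul_le_mul_of_nonneg_left ?_ (Real.exp_pos _).le
      refine (convexOn_exp.map_sum_le (fun k _ => hw k) hw1 (fun _ _ => Set.mem_univ _)).trans ?_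
      refine Finset.sum_le_sum fun k _ => ?_
      rw [smul_eq_mul, Real.exp_add, Real.exp_add, Real.exp_log (hFpos k), Real.exp_log (hpos k),
        neg_sub, sub_eq_add_neg (m k), Real.exp_add]
    have hint2 : ∀ k, Integrable (fun x => w k * (u k * (2 - Real.exp (m k) * Real.exp (-Λ k x)))) μ :=
      fun k => (((integrable_const _).sub ((hint k).const_mul _)).const_mul _).const_mul _
    have hint3 := (integrable_finsetSum Finset.univ fun k _ => hint2 k)
    refine (integral_mono hG (hint3.const_mul _) pt).trans ?_
    rw [integral_const_mul]
    refine mul_le_of_le_one_right (Real.exp_pos _).le ?_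
    rw [integral_finsetSum _ fun k _ => hint2 k, ← hw1]
    refine Finset.sum_le_sum fun k _ => ?_
    rw [integral_const_mul, integral_const_mul, integral_sub (integrable_const _)
      ((hint k).const_mul _), integral_const_mul]
    simp only [integral_const, probReal_univ, one_smul]
    change w k * (u k * (2 - u k)) ≤ w k
    nlinarith [hw k, sq_nonneg (u k - 1), mul_nonneg (hw k) (sq_nonneg (u k - 1))]
  have hlim : Filter.Tendsto (fun δ : ℝ => Real.exp (δ + ∑ k, w k * (-Real.log (F k))))
      (nhdsWithin 0 (Set.Ioi 0)) (nhds (Real.exp (0 + ∑ k, w k * (-Real.log (F k))))) :=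
    (Continuous.tendsto (by fun_prop) 0).mono_left nhdsWithin_le_nhds
  rw [zero_add] at hlim
  exact ge_of_tendsto hlim (by filter_upwards [self_mem_nhdsWithin] with δ hδ using main δ hδ)

universe v
theorem tal_core : ∀ (n : ℕ) (Ω : Fin n → Type v) [∀ i, MeasurableSpace (Ω i)]
    (P : ∀ i, Measure (Ω i)) [∀ i, IsProbabilityMeasure (P i)]
    (K : Type) [Fintype K] (w : K → ℝ) (_ : ∀ k, 0 ≤ w k) (_ : ∑ k, w k = 1)
    (φ : K → (∀ i, Ω i) → ℝ) (_ : ∀ k, Measurable (φ k)) (C : ℝ) (_ : ∀ k ω, |φ k ω| ≤ C)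
    (g : (∀ i, Ω i) → ℝ) (_ : Measurable g) (D : ℝ) (_ : ∀ ω, |g ω| ≤ D)
    (_ : ∀ ω, ∃ r : K → ℝ, (∀ k, RR (φ k) ω (r k)) ∧ g ω ≤ Real.exp (∑ k, w k * r k)),
    ∫ ω, g ω ∂(Measure.pi P) ≤
      Real.exp (∑ k, w k * (-Real.log (∫ ω, Real.exp (-φ k ω) ∂(Measure.pi P)))) := by
  intro n
  induction n with
  | zero =>
    intro Ω _ P _ K _ w hw hw1 φ hφ C hC g hg D hD h
    have hu : ∀ f : (∀ i, Ω i) → ℝ, ∫ ω, f ω ∂(Measure.pi P) = f default := by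
      intro f
      have : f = fun _ => f default := by ext x; rw [Subsingleton.elim x default]
      rw [this]; simp
    simp only [hu, Real.log_exp, neg_neg]
    obtain ⟨r, hr, hg'⟩ := h default
    refine hg'.trans (Real.exp_le_exp.2 (Finset.sum_le_sum fun k _ => 
      mul_le_mul_of_nonneg_left ?_ (hw k)))
    obtain ⟨β, hβ⟩ := hr k
    simpa using hβ default
  | succ n ih =>
    intro Ω _ P _ K _ w hw hw1 φ hφ C hC g hg D hD h
    set Q := Measure.pi fun j => P (Fin.succAbove 0 j) with hQ
    have hpr : ∀ f : (∀ i, Ω i) → ℝ, Measurable f → ∀ x, Measurable fun ω : ∀ j, Ω (Fin.succAbove 0 j) =>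
      f (Fin.insertNth 0 x ω) := fun f hf x =>
        hf.comp (meas_insert.comp (measurable_const.prodMk measurable_id))
    have hmi : ∀ f : (∀ i, Ω i) → ℝ, Measurable f → Measurable fun x =>
      ∫ ω, f (Fin.insertNth 0 x ω) ∂Q := fun f hf =>
        (StronglyMeasurable.integral_prod_right (f := fun x ω => f (Fin.insertNth 0 x ω))
          (hf.comp meas_insert).stronglyMeasurable).measurable
    have hexm : ∀ k, Measurable fun ω => Real.exp (-φ k ω) := fun k =>
      Real.measurable_exp.comp (hφ k).neg
    have hexb : ∀ k ω, |Real.exp (-φ k ω)| ≤ Real.exp C := fun k ω => by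
      rw [abs_of_pos (Real.exp_pos _)]
      exact Real.exp_le_exp.2 (by have := (abs_le.1 (hC k ω)).1; linarith)
    have hexb' : ∀ k ω, Real.exp (-C) ≤ Real.exp (-φ k ω) := fun k ω => 
      Real.exp_le_exp.2 (by have := (abs_le.1 (hC k ω)).2; linarith)
    have hexi : ∀ k x, Integrable (fun ω => Real.exp (-φ k (Fin.insertNth 0 x ω))) Q := fun k x =>
      integrable_bdd _ _ (hpr _ (hexm k) x) _ (fun ω => hexb k _)
    set Λ : K → Ω 0 → ℝ := fun k x =>
      -Real.log (∫ ω, Real.exp (-φ k (Fin.insertNth 0 x ω)) ∂Q) with hΛ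
    have hpos : ∀ k x, 0 < ∫ ω, Real.exp (-φ k (Fin.insertNth 0 x ω)) ∂Q := fun k x =>
      integral_exp_pos (hexi k x)
    have hΛm : ∀ k, Measurable (Λ k) := fun k => (Real.measurable_log.comp (hmi _ (hexm k))).neg
    have hΛb : ∀ k x, |Λ k x| ≤ C := by
      intro k x
      have h1 : ∫ ω, Real.exp (-φ k (Fin.insertNth 0 x ω)) ∂Q ≤ Real.exp C := by
        have := integral_mono (hexi k x) (integrable_const (Real.exp C))
          (fun ω => (le_abs_self _).trans (hexb k _))
        rwa [integral_const, probReal_univ, one_smul] at this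
      have h2 : Real.exp (-C) ≤ ∫ ω, Real.exp (-φ k (Fin.insertNth 0 x ω)) ∂Q := by
        have := integral_mono (integrable_const (Real.exp (-C))) (hexi k x) 
          (fun ω => hexb' k _)
        rwa [integral_const, probReal_univ, one_smul] at this
      rw [hΛ, abs_le]
      have h3 := (Real.log_le_iff_le_exp (hpos k x)).2 h1
      have h4 := (Real.le_log_iff_exp_le (hpos k x)).2 h2
      constructor <;> simp only <;> linarith
    have key := oneDim (P 0) K w hw hw1 Λ hΛm C hΛb (fun x => ∫ ω, g (Fin.insertNth 0 x ω) ∂Q)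
      (integrable_bdd _ _ (hmi g hg) D (fun x => by
        have := norm_integral_le_of_norm_le_const (μ := Q) (C := D)
          (f := fun ω => g (Fin.insertNth 0 x ω)) (Filter.Eventually.of_forall fun ω => hD _)
        rwa [probReal_univ, mul_one] at this)) ?_
    · rw [integral_split P g (integrable_bdd _ _ hg D hD)]
      refine key.trans (le_of_eq ?_)
      congr 1
      refine Finset.sum_congr rfl fun k _ => ?_
      rw [integral_split P _ (integrable_bdd _ _ (hexm k) _ (hexb k))]
      congr 3
      refine integral_congr_ae (Filter.Eventually.of_forall fun x => ?_)
      simp only [hΛ, neg_neg]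
      rw [Real.exp_log (hpos k x)]
    · intro x l hl0 hl1 y
      set E := ∑ k, w k * ((1 - l k)^2/4) with hE
      have := ih (fun j => Ω (Fin.succAbove 0 j)) (fun j => P (Fin.succAbove 0 j)) (K × Bool)
        (fun p => w p.1 * (if p.2 then l p.1 else 1 - l p.1))
        (fun p => mul_nonneg (hw _) (by split_ifs <;> linarith [hl0 p.1, hl1 p.1]))
        (by rw [Fintype.sum_prod_type]; simp [← mul_add, hw1])
        (fun p ω => φ p.1 (Fin.insertNth 0 (if p.2 then x else y p.1) ω))
        (fun p => hpr _ (hφ p.1) _) C (fun p ω => hC _ _)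
        (fun ω => Real.exp (-E) * g (Fin.insertNth 0 x ω)) ((hpr _ hg x).const_mul _)
        (Real.exp (-E) * D) (fun ω => by
          rw [abs_mul, abs_of_pos (Real.exp_pos _)]
          exact mul_le_mul_of_nonneg_left (hD _) (Real.exp_pos _).le) ?_
      · rw [integral_const_mul, Fintype.sum_prod_type] at this
        simp only [Fintype.sum_bool, if_true, Bool.false_eq_true, if_false] at this
        have h2 := mul_le_mul_of_nonneg_left this (Real.exp_pos E).le
        rw [← mul_assoc, ← Real.exp_add, add_neg_cancel, Real.exp_zero, one_mul, ← Real.exp_add] at h2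
        refine h2.trans (le_of_eq ?_)
        congr 1
        rw [hE, ← Finset.sum_add_distrib]
        refine Finset.sum_congr rfl fun k _ => ?_
        simp only [hΛ, hQ]
        ring
      · intro ω
        obtain ⟨r, hr, hgr⟩ := h (Fin.insertNth 0 x ω)
        choose β hβ using hr
        refine ⟨fun p => r p.1 + (β p.1 0)^2/4 - (if p.2 then 0 else 
          if y p.1 ≠ x then β p.1 0 / 2 else 0), ?_, ?_⟩
        · rintro ⟨k, b⟩
          refine ⟨fun j => β k (Fin.succAbove 0 j), fun ω' => ?_⟩
          have := hβ k (Fin.insertNth 0 (if b then x else y k) ω')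
          rw [Fin.sum_univ_succAbove _ 0] at this
          simp only [Fin.insertNth_apply_same, Fin.insertNth_apply_succAbove] at this
          cases b
          · simp only [Bool.false_eq_true, if_false] at this ⊢
            linarith
          · simp only [if_true, ne_eq, not_true, if_false] at this ⊢
            linarith
        · refine (mul_le_mul_of_nonneg_left hgr (Real.exp_pos _).le).trans ?_
          rw [← Real.exp_add, Fintype.sum_prod_type]
          refine Real.exp_le_exp.2 ?_
          rw [hE, ← Finset.sum_neg_distrib, ← Finset.sum_add_distrib]
          refine Finset.sum_le_sum fun k _ => ?_
          simp only [Fintype.sum_bool, if_true, Bool.false_eq_true, if_false]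
          have : 0 ≤ w k * ((1 - l k)^2/4 + (β k 0)^2/4 - (1 - l k) * 
              (if y k ≠ x then β k 0 / 2 else 0)) := by
            refine mul_nonneg (hw k) ?_
            split_ifs
            · nlinarith [sq_nonneg (1 - l k - β k 0)]
            · nlinarith [sq_nonneg (1 - l k), sq_nonneg (β k 0)]
          nlinarith

lemma cert_pair {n : ℕ} {Ω : Fin n → Type*}
    [∀ i, MeasurableSpace (Ω i)] (P : ∀ i, Measure (Ω i))
    [∀ i, IsProbabilityMeasure (P i)]
    (Ωstar : Set (∀ i, Ω i)) (X : (∀ i, Ω i) → ℝ)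
    (s c : ℝ) (hs : 0 < s) (hc : 1 ≤ c)
    (hcert : HasUpwardCertificates Ωstar X s c) (t : ℝ) (ht : 0 < t) (a : ℝ)
    (A B : Set (∀ i, Ω i)) (hA : MeasurableSet A) (hB : MeasurableSet B)
    (hA' : ∀ ω ∈ A, ω ∉ Ωstar ∧ X ω ≤ a) (hB' : ∀ ω ∈ B, ω ∉ Ωstar ∧ a + t ≤ X ω) :
    (Measure.pi P).real A * (Measure.pi P).real B ≤ Real.exp (-(t ^ 2) / (4 * c ^ 2 * s)) := by
  have hc0 : 0 < c := by linarith
  set T := t^2 / (c^2 * s) with hT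
  have hTpos : 0 < T := by positivity
  have hTe : -(t ^ 2) / (4 * c ^ 2 * s) = -(T/4) := by rw [hT]; field_simp
  rw [hTe]
  set φ : (∀ i, Ω i) → ℝ := fun ω => if ω ∈ A then 0 else T / 2 with hφ
  have hφm : Measurable φ := Measurable.ite hA measurable_const measurable_const
  have hφ0 : ∀ ω, 0 ≤ φ ω := fun ω => by simp only [hφ]; split_ifs <;> positivity
  have hφb : ∀ ω, |φ ω| ≤ T/2 := fun ω => by
    rw [abs_of_nonneg (hφ0 ω)]; simp only [hφ]; split_ifs
    · positivity
    · exact le_rfl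
  have core := tal_core n Ω P Unit (fun _ => 1) (fun _ => zero_le_one) (by simp) (fun _ => φ)
    (fun _ => hφm) (T/2) (fun _ => hφb) (B.indicator fun _ => Real.exp (T/4))
    (measurable_const.indicator hB) (Real.exp (T/4)) (fun ω => by
      by_cases h : ω ∈ B
      · rw [Set.indicator_of_mem h, abs_of_pos (Real.exp_pos _)]
      · rw [Set.indicator_of_notMem h, abs_zero]; exact (Real.exp_pos _).le) (fun ω => by
      by_cases h : ω ∈ B
      · refine ⟨fun _ => T/4, fun _ => ?_, by simp [h]⟩
        obtain ⟨hw, hXw⟩ := hB' ω h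
        obtain ⟨I, hI, hcI⟩ := hcert t ht ω hw
        set b := t / (c * s) with hb
        have hbpos : 0 < b := by positivity
        refine ⟨fun i => if i ∈ I then b else 0, fun ω' => ?_⟩
        have e1 : ∑ i, (if i ∈ I then b else 0)^2/4 = I.card * (b^2/4) := by
          have : ∀ i, (if i ∈ I then b else 0)^2/4 = if i ∈ I then b^2/4 else 0 := by
            intro i; split_ifs <;> simp
          rw [Finset.sum_congr rfl fun i _ => this i]
          simp
        have e2 : ∑ i, (if ω' i ≠ ω i then (if i ∈ I then b else 0) / 2 else 0) =
            ({i : Fin n | i ∈ I ∧ ω i ≠ ω' i}.ncard : ℝ) * (b/2) := by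
          have : ∀ i, (if ω' i ≠ ω i then (if i ∈ I then b else 0) / 2 else 0) =
              if (i ∈ I ∧ ω i ≠ ω' i) then b/2 else 0 := by
            intro i
            by_cases h1 : i ∈ I <;> by_cases h2 : ω' i = ω i <;> simp [h1, h2, eq_comm]
            · exact fun h => absurd h.symm h2
          simp only [this]
          rw [← Finset.sum_filter, Finset.sum_const, nsmul_eq_mul]
          congr 2
          rw [Set.ncard_eq_toFinset_card']
          congr 1
          ext i; simp
        rw [Finset.sum_sub_distrib, e1, e2]
        have e3 : (I.card : ℝ) * (b^2/4) ≤ T/4 := by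
          have : s * (b^2/4) = T/4 := by rw [hb, hT]; field_simp
          rw [← this]; exact mul_le_mul_of_nonneg_right hI (by positivity)
        by_cases hA1 : ω' ∈ A
        · obtain ⟨q1, q2⟩ := hA' ω' hA1
          have q3 : t / c ≤ ({i : Fin n | i ∈ I ∧ ω i ≠ ω' i}.ncard : ℝ) := by
            by_contra hcon
            have := hcI ω' q1 (not_le.1 hcon)
            linarith
          have q4 : t / c * (b/2) = T/2 := by rw [hb, hT]; field_simp
          have q5 := mul_le_mul_of_nonneg_right q3 (by positivity : 0 ≤ b/2)
          have q6 := hφ0 ω'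
          linarith
        · have q1 : φ ω' = T/2 := by simp [hφ, hA1]
          have q2 : 0 ≤ ({i : Fin n | i ∈ I ∧ ω i ≠ ω' i}.ncard : ℝ) * (b/2) := by positivity
          rw [q1]; linarith
      · refine ⟨fun _ => 0, fun _ => ⟨fun _ => 0, fun ω' => by simpa using hφ0 ω'⟩, by simp [h]⟩)
  have hei : Integrable (fun ω => Real.exp (-φ ω)) (Measure.pi P) :=
    integrable_bdd _ _ (Real.measurable_exp.comp hφm.neg) 1 (fun ω => by
      rw [abs_of_pos (Real.exp_pos _)]; exact Real.exp_le_one_iff.2 (neg_nonpos.2 (hφ0 ω)))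
  have hF : (Measure.pi P).real A ≤ ∫ ω, Real.exp (-φ ω) ∂(Measure.pi P) := by
    rw [← integral_indicator_one hA]
    refine integral_mono ((integrable_const _).indicator hA) hei fun ω => ?_
    by_cases h : ω ∈ A
    · simp [h, hφ]
    · simp [h, (Real.exp_pos _).le]
  have hFp := integral_exp_pos hei
  rw [integral_indicator_const _ hB] at core
  simp only [Finset.univ_unique, Finset.sum_const, Finset.card_singleton, one_smul, one_mul,
    smul_eq_mul] at core
  rw [Real.exp_neg, Real.exp_log hFp] at core
  have h1 : (Measure.pi P).real B * Real.exp (T/4) * (∫ ω, Real.exp (-φ ω) ∂(Measure.pi P)) ≤ 1 := by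
    have := mul_le_mul_of_nonneg_right core hFp.le
    rwa [inv_mul_cancel₀ hFp.ne'] at this
  have h2 : (Measure.pi P).real B * Real.exp (T/4) * (Measure.pi P).real A ≤ 1 :=
    (mul_le_mul_of_nonneg_left hF (by positivity)).trans h1
  rw [Real.exp_neg, ← one_div, le_div_iff₀ (Real.exp_pos _)]
  linarith

end TalHelpers

lemma tail_alg (x b p e : ℝ) (hx : 1/2 ≤ x) (hb : b ≤ 1/2) (hp : 0 ≤ p)
    (he : 0 ≤ e)
    (x' b' : ℝ) (h1 : x - p ≤ x') (h2 : b - p ≤ b') (h3 : 0 ≤ x') (h5 : x' * b' ≤ e) :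
    b ≤ 2 * e + 2 * p := by
  by_cases hbp : b ≤ p
  · linarith
  by_cases hp2 : 1/2 ≤ p
  · linarith
  have : (1/2 - p) * (b - p) ≤ x' * b' := 
    mul_le_mul (by linarith) h2 (by linarith) h3
  nlinarith [mul_nonneg hp (by linarith : 0 ≤ 1/2 - b), mul_nonneg hp hp]

theorem talagrand_around_mean {n : ℕ} {Ω : Fin n → Type*}
    [∀ i, MeasurableSpace (Ω i)] (P : ∀ i, Measure (Ω i))
    [∀ i, IsProbabilityMeasure (P i)]
    (Ωstar : Set (∀ i, Ω i)) (hΩstar : MeasurableSet Ωstar)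
    (X : (∀ i, Ω i) → ℝ) (hX : Measurable X)
    (hbdd : BddAbove (Set.range fun ω => |X ω|))
    (M : ℝ) (hM : M = max (⨆ ω, |X ω|) 1)
    (s c : ℝ) (hs : 0 < s) (hc : 1 ≤ c)
    (hcert : HasUpwardCertificates Ωstar X s c) (t : ℝ) (ht : 0 ≤ t) :
    ((Measure.pi P) {ω | t + 20 * c * Real.sqrt s + 20 * M ^ 2 * ((Measure.pi P) Ωstar).toReal
        ≤ |X ω - ∫ ω', X ω' ∂(Measure.pi P)|}).toReal ≤
      4 * Real.exp (-(t ^ 2) / (4 * c ^ 2 * s)) + 4 * ((Measure.pi P) Ωstar).toReal := by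
  set μ := Measure.pi P with hμ
  change μ.real _ ≤ _ + 4 * μ.real Ωstar
  change μ.real {ω | t + 20 * c * Real.sqrt s + 20 * M ^ 2 * μ.real Ωstar ≤ _} ≤ _ + 4 * μ.real Ωstar
  set p := μ.real Ωstar with hp
  have hp0 : 0 ≤ p := measureReal_nonneg
  have hc0 : 0 < c := by linarith
  have hM1 : 1 ≤ M := hM ▸ le_max_right _ _
  have hXM : ∀ ω, |X ω| ≤ M := fun ω => hM ▸ (le_ciSup hbdd ω).trans (le_max_left _ _)
  set ε := c * Real.sqrt s with hε
  have hε0 : 0 < ε := mul_pos hc0 (Real.sqrt_pos.2 hs)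
  have hXi : Integrable X μ := integrable_bdd _ _ hX M hXM
  -- approximate median
  set S : Set ℝ := {a | 1/2 ≤ μ.real {ω | X ω ≤ a}} with hS
  have hMS : M ∈ S := by
    have : {ω | X ω ≤ M} = Set.univ := by ext ω; simpa using (abs_le.1 (hXM ω)).2
    simp only [hS, Set.mem_ofPred_eq, this, probReal_univ]; norm_num
  have hSlb : ∀ a ∈ S, -M ≤ a := by
    intro a ha
    by_contra hcon
    have : {ω | X ω ≤ a} = ∅ := by
      ext ω; simp only [Set.mem_ofPred_eq, Set.mem_empty_iff_false, iff_false]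
      have := (abs_le.1 (hXM ω)).1; linarith
    simp only [hS, Set.mem_ofPred_eq, this, measureReal_empty] at ha
    norm_num at ha
  have hSb : BddBelow S := ⟨-M, hSlb⟩
  set m := sInf S with hm
  have hmM : m ≤ M := csInf_le hSb hMS
  have hmM' : -M ≤ m := le_csInf ⟨M, hMS⟩ hSlb
  have hup : 1/2 ≤ μ.real {ω | X ω ≤ m + ε} := by
    obtain ⟨a, ha, ha'⟩ := exists_lt_of_csInf_lt ⟨M, hMS⟩ (show sInf S < m + ε by linarith)
    exact (show 1/2 ≤ μ.real {ω | X ω ≤ a} from ha).trans 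
      (measureReal_mono (fun ω (h : X ω ≤ a) => (h.trans ha'.le : X ω ≤ m + ε)))
  have hlow : μ.real {ω | X ω ≤ m - ε} ≤ 1/2 := by
    by_contra hcon
    have : m ≤ m - ε := csInf_le hSb (show m - ε ∈ S from (not_le.1 hcon).le)
    linarith
  have hle : ∀ a, MeasurableSet {ω | X ω ≤ a} := fun a => measurableSet_le hX measurable_const
  have hge : ∀ a, MeasurableSet {ω | a ≤ X ω} := fun a => measurableSet_le measurable_const hX
  have hdiff : ∀ A : Set (∀ i, Ω i), μ.real A - p ≤ μ.real (A \ Ωstar) := fun A => by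
    have := le_measureReal_sdiff (μ := μ) (s₁ := A) (s₂ := Ωstar)
    linarith
  have tail : ∀ u, 0 < u → μ.real {ω | u + ε ≤ |X ω - m|} ≤ 
      4 * Real.exp (-(u ^ 2) / (4 * c ^ 2 * s)) + 4 * p := by
    intro u hu
    have pair : ∀ a, μ.real ({ω | X ω ≤ a} \ Ωstar) * μ.real ({ω | a + u ≤ X ω} \ Ωstar) ≤
        Real.exp (-(u ^ 2) / (4 * c ^ 2 * s)) := fun a =>
      cert_pair P Ωstar X s c hs hc hcert u hu a _ _ ((hle a).diff hΩstar) ((hge _).diff hΩstar)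
        (fun ω h => ⟨h.2, h.1⟩) (fun ω h => ⟨h.2, h.1⟩)
    have t1 : μ.real {ω | m + ε + u ≤ X ω} ≤ 2 * Real.exp (-(u ^ 2) / (4 * c ^ 2 * s)) + 2 * p := by
      refine tail_alg (μ.real {ω | X ω ≤ m + ε}) _ p _ hup ?_ hp0 (Real.exp_pos _).le _ _ (hdiff _) (hdiff _)
        measureReal_nonneg (pair (m + ε))
      have h1 : μ.real {ω | m + ε + u ≤ X ω} ≤ μ.real {ω | X ω ≤ m + ε}ᶜ :=
        measureReal_mono (fun ω (h : m + ε + u ≤ X ω) => by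
          simp only [Set.mem_compl_iff, Set.mem_ofPred_eq]; linarith)
      rw [probReal_compl_eq_one_sub (hle _)] at h1
      linarith
    have t2 : μ.real {ω | X ω ≤ m - ε - u} ≤ 2 * Real.exp (-(u ^ 2) / (4 * c ^ 2 * s)) + 2 * p := by
      have hpr := pair (m - ε - u)
      rw [sub_add_cancel, mul_comm] at hpr
      refine tail_alg (μ.real {ω | m - ε ≤ X ω}) _ p _ ?_ ?_ hp0 (Real.exp_pos _).le _ _ (hdiff _) (hdiff _)
        measureReal_nonneg hpr
      · have h1 : μ.real {ω | m - ε ≤ X ω}ᶜ ≤ μ.real {ω | X ω ≤ m - ε} :=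
          measureReal_mono (fun ω h => by
            simp only [Set.mem_compl_iff, Set.mem_ofPred_eq] at h ⊢; linarith)
        rw [probReal_compl_eq_one_sub (hge _)] at h1
        linarith
      · exact (measureReal_mono (fun ω (h : X ω ≤ m - ε - u) => 
          (by linarith : X ω ≤ m - ε))).trans hlow
    have t3 : μ.real {ω | u + ε ≤ |X ω - m|} ≤ 
        μ.real ({ω | m + ε + u ≤ X ω} ∪ {ω | X ω ≤ m - ε - u}) := by
      refine measureReal_mono (fun ω (h : u + ε ≤ |X ω - m|) => ?_)
      rcases le_abs.1 h with h | h
      · left; simp only [Set.mem_ofPred_eq]; linarith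
      · right; simp only [Set.mem_ofPred_eq]; linarith
    have t4 := measureReal_union_le (μ := μ) {ω | m + ε + u ≤ X ω} {ω | X ω ≤ m - ε - u}
    linarith
  have hmean : |∫ ω, X ω ∂μ - m| ≤ ε + (8 * ε + 8 * M * p) := by
    set Y : (∀ i, Ω i) → ℝ := fun ω => max (|X ω - m| - ε) 0 with hY
    have hYm : Measurable Y := (((hX.sub_const m).abs).sub_const ε).max measurable_const
    have hY0 : ∀ ω, 0 ≤ Y ω := fun ω => le_max_right _ _
    have hYb : ∀ ω, Y ω ≤ 2 * M := fun ω => by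
      refine max_le ?_ (by linarith)
      have h1 := abs_le.1 (hXM ω)
      have : |X ω - m| ≤ 2 * M := abs_le.2 ⟨by linarith [h1.1], by linarith [h1.2]⟩
      linarith
    have hYi : Integrable Y μ := integrable_bdd _ _ hYm (2 * M) (fun ω => by
      rw [abs_of_nonneg (hY0 ω)]; exact hYb ω)
    have e1 : |∫ ω, X ω ∂μ - m| ≤ ε + ∫ ω, Y ω ∂μ := by
      have h1 : ∫ ω, X ω ∂μ - m = ∫ ω, (X ω - m) ∂μ := by
        rw [integral_sub hXi (integrable_const _)]; simp
      have h2 : ∫ ω, (ε + Y ω) ∂μ = ε + ∫ ω, Y ω ∂μ := by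
        rw [integral_add (integrable_const _) hYi]; simp
      rw [h1, ← h2]
      refine (abs_integral_le_integral_abs).trans (integral_mono (hXi.sub (integrable_const _)).abs
        ((integrable_const _).add hYi) fun ω => ?_)
      have : |X ω - m| - ε ≤ Y ω := le_max_left _ _
      simp only [Pi.add_apply]
      linarith
    refine e1.trans (add_le_add le_rfl ?_)
    rw [hYi.integral_eq_integral_Ioc_meas_le (Filter.Eventually.of_forall hY0) 
      (Filter.Eventually.of_forall hYb)]
    set b := 1 / (4 * c^2 * s) with hb
    have hbpos : 0 < b := by positivity
    have hgi : Integrable (fun u : ℝ => Real.exp (-b * u^2)) := integrable_exp_neg_mul_sq hbpos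
    have e2 : ∫ u in Set.Ioc 0 (2 * M), μ.real {a | u ≤ Y a} ≤ 
        ∫ u in Set.Ioc 0 (2 * M), (4 * Real.exp (-b * u^2) + 4 * p) := by
      refine setIntegral_mono_on ?_ ?_ measurableSet_Ioc ?_
      · refine Measure.integrableOn_of_bounded (M := 1) measure_Ioc_lt_top.ne ?_ ?_
        · refine (Antitone.measurable fun x y hxy => ?_).aestronglyMeasurable
          exact measureReal_mono fun ω (h : y ≤ Y ω) => (hxy.trans h : x ≤ Y ω)
        · refine Filter.Eventually.of_forall fun u => ?_
          rw [Real.norm_eq_abs, abs_of_nonneg measureReal_nonneg]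
          exact measureReal_le_one
      · exact (hgi.integrableOn.const_mul 4).add (integrable_const _)
      · intro u hu
        have h1 := tail u hu.1
        have h2 : -(u^2) / (4 * c^2 * s) = -b * u^2 := by rw [hb]; ring
        rw [h2] at h1
        refine le_trans (measureReal_mono fun ω (h : u ≤ Y ω) => ?_) h1
        rcases le_max_iff.1 h with h | h
        · simp only [Set.mem_ofPred_eq]; linarith
        · exact absurd h (not_le.2 hu.1)
    refine e2.trans ?_
    rw [integral_add (hgi.integrableOn.const_mul 4) (integrable_const _), integral_const_mul]
    have e3 : ∫ u in Set.Ioc 0 (2 * M), Real.exp (-b * u^2) ≤ 2 * ε := by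
      have h1 : ∫ u in Set.Ioc 0 (2 * M), Real.exp (-b * u^2) ≤ 
          ∫ u in Set.Ioi 0, Real.exp (-b * u^2) :=
        setIntegral_mono_set hgi.integrableOn 
          (Filter.Eventually.of_forall fun u => (Real.exp_pos _).le)
          (Filter.Eventually.of_forall fun u (hu : u ∈ Set.Ioc 0 (2 * M)) => hu.1)
      rw [integral_gaussian_Ioi] at h1
      have h2 : Real.sqrt (Real.pi / b) ≤ 4 * ε := by
        rw [Real.sqrt_le_left (by positivity)]
        have : (4 * ε)^2 = 4 * (4 * c^2 * s) := by
          rw [hε, mul_pow, mul_pow, Real.sq_sqrt hs.le]; ring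
        rw [this, hb, div_div_eq_mul_div, div_one]
        exact mul_le_mul_of_nonneg_right Real.pi_le_four (by positivity)
      linarith
    have e4 : ∫ u in Set.Ioc 0 (2 * M), 4 * p = 8 * M * p := by
      rw [setIntegral_const, Real.volume_real_Ioc_of_le (by linarith), smul_eq_mul]; ring
    rw [e4]
    linarith
  rcases ht.eq_or_lt with h0 | hpos
  · rw [← h0]
    have : μ.real {ω | 0 + 20 * c * Real.sqrt s + 20 * M ^ 2 * p ≤ |X ω - ∫ ω', X ω' ∂μ|} ≤ 1 := 
      measureReal_le_one
    refine this.trans ?_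
    norm_num
    linarith
  · refine (measureReal_mono fun ω h => ?_).trans (tail t hpos)
    simp only [Set.mem_ofPred_eq] at h ⊢
    have h1 : |X ω - ∫ ω', X ω' ∂μ| ≤ |X ω - m| + |∫ ω', X ω' ∂μ - m| := by
      have := abs_sub (X ω - m) (∫ ω', X ω' ∂μ - m)
      simpa using this
    have h2 : M * p ≤ M^2 * p := mul_le_mul_of_nonneg_right (by nlinarith) hp0
    have h3 : 20 * c * Real.sqrt s = 20 * ε := by rw [hε]; ring
    have h4 : 0 ≤ M^2 * p := by positivity
    rw [h3] at h
    linarith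
end

section
/- For every δ ∈ (0, 0.9], the value γ = 0.1827·δ − 0.0778·δ^{3/2} lies in (0,1) and satisfies γ < (δ/(2(1−γ)))·e^{−1/(1−γ)} − (δ^{3/2}/(6(1−γ)²))·e^{−7/(8(1−γ))}. -/
lemma aux_exp78 : Real.exp (-(7/8 : ℝ)) < 0.41687 := by
  have h1 : Real.exp (1/8 : ℝ) ≤ 1.1331486 := by
    have := Real.exp_bound' (x := (1/8 : ℝ)) (by norm_num) (by norm_num) (n := 6) (by norm_num)
    refine this.trans ?_
    norm_num [Finset.sum_range_succ, Nat.factorial]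
  have h2 : Real.exp (-(7/8 : ℝ)) = Real.exp (1/8) * Real.exp (-1) := by
    rw [← Real.exp_add]; norm_num
  have h3 := Real.exp_neg_one_lt_d9
  have h4 := Real.exp_pos (-1)
  rw [h2]
  nlinarith

lemma aux_one (w : ℝ) (h0 : 0 ≤ w) (h1 : w ≤ 0.1088) :
    1 - 0.058 * (w / (1 + w)) ≤ (1 + w) * Real.exp (-w) := by
  have hb := Real.exp_bound' (x := w) h0 (by linarith) (n := 3) (by norm_num)
  norm_num [Finset.sum_range_succ, Nat.factorial] at hb
  have hw : 0 < 1 + w := by linarith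
  have e : 1 - 0.058 * (w / (1 + w)) = (1 + 0.942 * w) / (1 + w) := by
    field_simp; ring
  rw [e, Real.exp_neg, ← div_eq_mul_inv, div_le_div_iff₀ hw (Real.exp_pos w)]
  have h2 : (1 + 0.942 * w) * Real.exp w ≤ (1 + 0.942 * w) * (1 + w + w^2/2 + w^3*4/18) := by
    apply mul_le_mul_of_nonneg_left _ (by linarith)
    linarith
  refine h2.trans ?_
  have h3 : 0 ≤ w * (0.1088 - w) := mul_nonneg h0 (by linarith)
  nlinarith [mul_nonneg h0 h3, mul_nonneg h0 (mul_nonneg h0 h3)]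

lemma aux_two (w : ℝ) (h0 : 0 ≤ w) (h1 : w ≤ 0.1088) :
    (1 + w)^2 * Real.exp (-(7/8*w)) ≤ 1 + 1.205 * (w / (1 + w)) := by
  have hb := Real.quadratic_le_exp_of_nonneg (x := 7/8*w) (by linarith)
  have hw : 0 < 1 + w := by linarith
  have e : 1 + 1.205 * (w / (1 + w)) = (1 + 2.205 * w) / (1 + w) := by
    field_simp; ring
  rw [e, Real.exp_neg, ← div_eq_mul_inv, div_le_div_iff₀ (Real.exp_pos _) hw]
  have h2 : (1 + 2.205 * w) * (1 + 7/8*w + (7/8*w)^2/2) ≤ (1 + 2.205 * w) * Real.exp (7/8*w) :=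
    mul_le_mul_of_nonneg_left hb (by linarith)
  refine le_trans ?_ h2
  have h3 : 0 ≤ w * (0.1088 - w) := mul_nonneg h0 (by linarith)
  nlinarith [mul_nonneg h0 h3, mul_nonneg h0 (mul_nonneg h0 h3)]

lemma aux_poly (s : ℝ) (h0 : 0 ≤ s) (h1 : s ≤ 0.94869) :
    0.1827 - 0.0778 * s < 0.18393 * (1 - 0.058 * (s^2 * (0.1827 - 0.0778*s)))
      - s / 6 * 0.41687 * (1 + 1.205 * (s^2 * (0.1827 - 0.0778*s))) := by
  have h2 : 0 ≤ 0.94869 - s := by linarith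
  nlinarith [mul_nonneg h0 h2, mul_nonneg h0 (mul_nonneg h0 h2), mul_nonneg (mul_nonneg h0 h0) (mul_nonneg h0 h2), mul_nonneg (mul_nonneg h0 h2) (mul_nonneg h0 h2)]

/-- For every `δ ∈ (0, 0.9]`, the value `γ = 0.1827·δ − 0.0778·δ^{3/2}` lies in `(0,1)`
and satisfies
`γ < (δ/(2(1−γ)))·e^{−1/(1−γ)} − (δ^{3/2}/(6(1−γ)²))·e^{−7/(8(1−γ))}`. -/
theorem gamma_choice_works (δ : ℝ) (hδ0 : 0 < δ) (hδ1 : δ ≤ 0.9)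
    (γ : ℝ) (hγ : γ = 0.1827 * δ - 0.0778 * δ ^ ((3 : ℝ) / 2)) :
    (0 < γ ∧ γ < 1) ∧
    γ < δ / (2 * (1 - γ)) * Real.exp (-(1 / (1 - γ))) -
      δ ^ ((3 : ℝ) / 2) / (6 * (1 - γ) ^ 2) * Real.exp (-(7 / (8 * (1 - γ)))) := by
  obtain ⟨s, hs0, rfl⟩ : ∃ s : ℝ, 0 < s ∧ s^2 = δ :=
    ⟨√δ, Real.sqrt_pos.2 hδ0, Real.sq_sqrt hδ0.le⟩
  have hp : (s^2) ^ ((3 : ℝ) / 2) = s^3 := by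
    rw [← Real.rpow_natCast s 2, ← Real.rpow_mul hs0.le, ← Real.rpow_natCast s 3]; norm_num
  rw [hp] at hγ ⊢
  have hs1 : s ≤ 0.94869 := by nlinarith
  have hg : γ = s^2 * (0.1827 - 0.0778*s) := by rw [hγ]; ring
  have hg0 : 0 < γ := by rw [hg]; apply mul_pos hδ0; linarith
  have hg1 : γ ≤ 0.0981 := by
    rw [hg]
    nlinarith [mul_nonneg hs0.le (sub_nonneg.2 hs1), mul_nonneg hδ0.le (sub_nonneg.2 hs1)]
  refine ⟨⟨hg0, by linarith⟩, ?_⟩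
  have hu : 0 < 1 - γ := by linarith
  obtain ⟨w, hw⟩ : ∃ w, w = γ / (1 - γ) := ⟨_, rfl⟩
  have hw0 : 0 ≤ w := by rw [hw]; positivity
  have hw1 : w ≤ 0.1088 := by rw [hw, div_le_iff₀ hu]; linarith
  have ht : 1 / (1 - γ) = 1 + w := by rw [hw]; field_simp; ring
  have hgw : w / (1 + w) = γ := by rw [← ht, hw]; field_simp
  have a1 := aux_one w hw0 hw1
  have a2 := aux_two w hw0 hw1
  rw [hgw] at a1 a2
  have e1 : s^2 / (2 * (1 - γ)) * Real.exp (-(1 / (1 - γ)))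
      = s^2 * (Real.exp (-1) / 2 * ((1 + w) * Real.exp (-w))) := by
    rw [ht, neg_add, Real.exp_add, ← ht]; field_simp
  have e2 : s^3 / (6 * (1 - γ)^2) * Real.exp (-(7 / (8 * (1 - γ))))
      = s^2 * (s / 6 * (Real.exp (-(7/8)) * ((1 + w)^2 * Real.exp (-(7/8*w))))) := by
    have : -(7 / (8 * (1 - γ))) = -(7/8) + -(7/8*w) := by
      have : 7 / (8 * (1 - γ)) = 7/8 * (1 / (1 - γ)) := by field_simp
      rw [this, ht]; ring
    rw [this, Real.exp_add, ← ht]; field_simp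
  rw [e1, e2, ← mul_sub]
  have hP := aux_poly s hs0.le hs1
  rw [← hg] at hP
  have b1 : 0.18393 * (1 - 0.058 * γ) ≤ Real.exp (-1) / 2 * ((1 + w) * Real.exp (-w)) := by
    apply mul_le_mul _ a1 (by linarith) (by positivity)
    have := Real.exp_neg_one_gt_d9
    linarith
  have b2 : s / 6 * (Real.exp (-(7/8)) * ((1 + w)^2 * Real.exp (-(7/8*w))))
      ≤ s / 6 * (0.41687 * (1 + 1.205 * γ)) := by
    apply mul_le_mul_of_nonneg_left _ (by positivity)
    exact mul_le_mul aux_exp78.le a2 (by positivity) (by norm_num)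
  nth_rewrite 1 [hg]
  apply mul_lt_mul_of_pos_left _ hδ0
  linarith
end

section
/- For all real numbers α with 0 ≤ α ≤ 1/2 and x with 0 ≤ x ≤ 1/2, it holds that 2 − α − x − (2 − α − 2x)²/(2(2 − α)²) ≤ 3/2. -/
/-- For all `0 ≤ α ≤ 1/2` and `0 ≤ x ≤ 1/2` it holds that
`2 − α − x − (2 − α − 2x)²/(2(2 − α)²) ≤ 3/2`. -/
theorem elementary_inequality (α x : ℝ) (hα0 : 0 ≤ α) (hα : α ≤ 1 / 2)
    (hx0 : 0 ≤ x) (hx : x ≤ 1 / 2) :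
    2 - α - x - (2 - α - 2 * x) ^ 2 / (2 * (2 - α) ^ 2) ≤ 3 / 2 := by
  have hc : 0 < 2 - α := by linarith
  have h1 : 0 ≤ (2 - α) * (α * (2 - α - x)) :=
    mul_nonneg hc.le (mul_nonneg hα0 (by linarith))
  have h2 : 2 - α - x - 3 / 2 ≤ (2 - α - 2 * x) ^ 2 / (2 * (2 - α) ^ 2) := by
    rw [le_div_iff₀ (by positivity)]
    nlinarith [sq_nonneg x]
  linarith
end
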